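/- Let α_1 ≤ α_2, α ≥ 0, w = (w_j)_{j∈ℕ_0} ∈ W^α_{α_1,α_2} an admissible weight sequence, and p, q, u variable exponents on ℝ^n with p ≤ u. Let a > 0 and R ∈ ℕ_0 with R > α_2. Let ψ_0, ψ_1 ∈ S(ℝ^n) satisfy D^β ψ_1(0) = 0 for all multi-indices β with 0 ≤ |β| < R, and let φ_0, φ_1 ∈ S(ℝ^n) satisfy |φ_0(x)| > 0 on {|x| ≤ kε} and |φ_1(x)| > 0 on {ε ≤ |x| ≤ 2kε} for some ε > 0 and k ∈ (1,2]. With ψ_j(x) := ψ_1(2^{−j+1}x), φ_j(x) := φ_1(2^{−j+1}x) for j ≥ 2, Ψ_j := ψ̂_j, Φ_j := φ̂_j, there is c > 0 such that for every tempered distribution f ∈ S'(ℝ^n): ‖((Ψ_j^* f)_a w_j)_j‖_{M^{u(·)}_{p(·)}(ℓ^{q(·)})} ≤ c ‖((Φ_j^* f)_a w_j)_j‖_{M^{u(·)}_{p(·)}(ℓ^{q(·)})}. -/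

import Mathlib

open MeasureTheory ENNReal Real
open scoped FourierTransform

noncomputable section

/-- Euclidean space `ℝ^n`. -/
abbrev Rn (n : ℕ) : Type := EuclideanSpace ℝ (Fin n)

variable {n : ℕ}

/-- The function `φ_t(s)` used in the semimodular of variable exponent Lebesgue spaces:
`φ_t(s) = s^t` for `t < ∞`, while `φ_∞(s) = 0` for `s ≤ 1` and `= ∞` for `s > 1`. -/
def phiVE (t : ℝ≥0∞) (s : ℝ≥0∞) : ℝ≥0∞ :=
  if t = ∞ then (if s ≤ 1 then 0 else ∞) else s ^ t.toReal

/-- The semimodular `ρ_p` of variable exponent Lebesgue spaces. -/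
def modularVE (p : Rn n → ℝ≥0∞) (g : Rn n → ℝ≥0∞) : ℝ≥0∞ :=
  ∫⁻ x, phiVE (p x) (g x)

/-- The variable exponent Lebesgue quasi-norm `‖·‖_{L^{p(·)}(ℝ^n)}`, applied to the
(pointwise) absolute value of a function, i.e. to `[0,∞]`-valued functions.
(For `p⁻ ≥ 1` this is the usual Luxemburg norm; for general `p` it agrees with the
definition via `‖f‖ = ‖|f|^t‖_{L^{p/t}}^{1/t}`.) -/
def vLpNorm (p : Rn n → ℝ≥0∞) (g : Rn n → ℝ≥0∞) : ℝ≥0∞ :=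
  sInf {lam : ℝ≥0∞ | modularVE p (fun x => g x / lam) ≤ 1}

/-- A variable exponent: a measurable function `p : ℝ^n → (0,∞]` with `p⁻ = ess inf p > 0`. -/
def IsVarExp (p : Rn n → ℝ≥0∞) : Prop :=
  Measurable p ∧ (∀ x, 0 < p x) ∧ 0 < essInf p (volume : Measure (Rn n))

/-- Local log-Hölder continuity of `g : ℝ^n → ℝ`. -/
def LocLogHolder (g : Rn n → ℝ) : Prop :=
  ∃ c > 0, ∀ x y : Rn n, |g x - g y| ≤ c / Real.log (Real.exp 1 + (dist x y)⁻¹)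

/-- Log-Hölder decay of `g` at infinity, with limit value `gInf` and constant `c`. -/
def LogDecay (g : Rn n → ℝ) (gInf c : ℝ) : Prop :=
  ∀ x : Rn n, |g x - gInf| ≤ c / Real.log (Real.exp 1 + ‖x‖)

/-- `p ∈ P^log(ℝ^n)`, with prescribed limit value `pinvInf = 1/p_∞` of `1/p` at infinity. -/
def IsPLogWith (p : Rn n → ℝ≥0∞) (pinvInf : ℝ) : Prop :=
  IsVarExp p ∧ LocLogHolder (fun x => (p x)⁻¹.toReal) ∧
    ∃ c > 0, LogDecay (fun x => (p x)⁻¹.toReal) pinvInf c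

/-- `p ∈ P^log(ℝ^n)`. -/
def IsPLog (p : Rn n → ℝ≥0∞) : Prop := ∃ pinvInf : ℝ, IsPLogWith p pinvInf

/-- The Morrey quasi-norm `‖·‖_{M^{u(·)}_{p(·)}(ℝ^n)}` of a `[0,∞]`-valued function:
`sup_{x, r>0} r^{n(1/u(x) - 1/p(x))} ‖f‖_{L^{p(·)}(B_r(x))}`. -/
def morreyNorm (p u : Rn n → ℝ≥0∞) (g : Rn n → ℝ≥0∞) : ℝ≥0∞ :=
  ⨆ (x : Rn n) (r : ℝ) (_ : 0 < r),
    ENNReal.ofReal (r ^ ((n : ℝ) * ((u x)⁻¹.toReal - (p x)⁻¹.toReal))) *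
      vLpNorm p ((Metric.ball x r).indicator g)

/-- The `ℓ^q` (quasi-)norm of a sequence in `[0,∞]`, with the usual modification for `q = ∞`. -/
def lqNorm (q : ℝ≥0∞) (a : ℕ → ℝ≥0∞) : ℝ≥0∞ :=
  if q = ∞ then ⨆ ν, a ν else (∑' ν, a ν ^ q.toReal) ^ (1 / q.toReal)

/-- The vector-valued Morrey quasi-norm `‖(f_ν)_ν‖_{M^{u(·)}_{p(·)}(ℓ^{q(·)})}`. -/
def morreySeqNorm (p u q : Rn n → ℝ≥0∞) (f : ℕ → Rn n → ℝ≥0∞) : ℝ≥0∞ :=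
  morreyNorm p u (fun x => lqNorm (q x) (fun ν => f ν x))

/-- The kernel `η_{ν,m}(x) = 2^{νn} (1 + 2^ν |x|)^{-m}`. -/
def etaK (ν : ℕ) (m : ℝ) (x : Rn n) : ℝ≥0∞ :=
  ENNReal.ofReal ((2 : ℝ) ^ (ν * n) * (1 + 2 ^ ν * ‖x‖) ^ (-m))

/-- Convolution of `[0,∞]`-valued functions. -/
def lconv (f g : Rn n → ℝ≥0∞) (x : Rn n) : ℝ≥0∞ := ∫⁻ y, f (x - y) * g y

/-- The constant `c_{p,u} = max(0, sup_x (1/p(x) - 1/u(x)) - 1/p_∞)`. -/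
def cpu (p u : Rn n → ℝ≥0∞) (pinvInf : ℝ) : ℝ :=
  max 0 ((⨆ x : Rn n, ((p x)⁻¹.toReal - (u x)⁻¹.toReal)) - pinvInf)

/-- Tempered distributions on `ℝ^n`. -/
abbrev TemperedDist (n : ℕ) : Type := SchwartzMap (Rn n) ℂ →L[ℂ] ℂ

lemma hasTemperateGrowth_reflectTranslate (y : Rn n) :
    Function.HasTemperateGrowth (fun z : Rn n => y - z) := by
  have hd : Differentiable ℝ (fun z : Rn n => y - z) :=
    (differentiable_const y).sub differentiable_id
  have hfd : fderiv ℝ (fun z : Rn n => y - z)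
      = fun _ => -(ContinuousLinearMap.id ℝ (Rn n)) := by
    funext z
    rw [fderiv_const_sub, fderiv_id']
  refine Function.HasTemperateGrowth.of_fderiv (k := 1) (C := ‖y‖ + 1) ?_ hd ?_
  · rw [hfd]; exact .const _
  · intro x
    calc ‖y - x‖ ≤ ‖y‖ + ‖x‖ := norm_sub_le _ _
      _ ≤ (‖y‖ + 1) * (1 + ‖x‖) ^ 1 := by
          have h1 := norm_nonneg x
          have h2 := norm_nonneg y
          nlinarith

/-- The map `z ↦ Ψ (y - z)`, as a Schwartz function. -/
def reflectTranslate (y : Rn n) (Ψ : SchwartzMap (Rn n) ℂ) : SchwartzMap (Rn n) ℂ :=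
  SchwartzMap.compCLMOfAntilipschitz (𝕜 := ℂ) (K := 1)
    (hasTemperateGrowth_reflectTranslate y)
    ((Isometry.of_dist_eq (fun z z' => dist_sub_left y z z')).antilipschitz) Ψ

@[simp] lemma reflectTranslate_apply (y : Rn n) (Ψ : SchwartzMap (Rn n) ℂ) (z : Rn n) :
    reflectTranslate y Ψ z = Ψ (y - z) := rfl

/-- The convolution `(Ψ ∗ f)(y) = f(Ψ(y - ·))` of a Schwartz function `Ψ` with a tempered
distribution `f`. -/
def distConv (Ψ : SchwartzMap (Rn n) ℂ) (f : TemperedDist n) (y : Rn n) : ℂ :=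
  f (reflectTranslate y Ψ)

/-- The Peetre maximal function at level `j`, with parameter `a`, of a function `F`
(to be applied with `F = Ψ_j ∗ f`):  `sup_y ‖F y‖ / (1 + |2^j (y - x)|^a)`. -/
def peetreMax (a : ℝ) (j : ℕ) (F : Rn n → ℂ) (x : Rn n) : ℝ≥0∞ :=
  ⨆ y : Rn n, (‖F y‖₊ : ℝ≥0∞) / ENNReal.ofReal (1 + ((2 : ℝ) ^ j * ‖y - x‖) ^ a)

/-- Admissible weight sequences from the class `W^α_{α₁,α₂}`, with constant `C` in
condition (i). -/
def AdmissibleWeights (al al1 al2 C : ℝ) (w : ℕ → Rn n → ℝ) : Prop :=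
  (∀ j, Measurable (w j)) ∧
  (∀ (j : ℕ) (x y : Rn n), 0 < w j x ∧ w j x ≤ C * w j y * (1 + 2 ^ j * ‖x - y‖) ^ al) ∧
  (∀ (j : ℕ) (x : Rn n), 2 ^ al1 * w j x ≤ w (j + 1) x ∧ w (j + 1) x ≤ 2 ^ al2 * w j x)

/-- An admissible pair `(φ̌, Φ̌)`, described through the generating functions `φ, Φ`. -/
def AdmissiblePair (phi Phi : SchwartzMap (Rn n) ℂ) : Prop :=
  (Function.support ⇑phi ⊆ {x : Rn n | 1 / 2 ≤ ‖x‖ ∧ ‖x‖ ≤ 2}) ∧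
  (Function.support ⇑Phi ⊆ {x : Rn n | ‖x‖ ≤ 2}) ∧
  ∃ c > 0, (∀ x : Rn n, 3 / 5 ≤ ‖x‖ → ‖x‖ ≤ 5 / 3 → c ≤ ‖phi x‖) ∧
    (∀ x : Rn n, ‖x‖ ≤ 5 / 3 → c ≤ ‖Phi x‖)

open Topology Filter
open scoped SchwartzMap LineDeriv

section Translation

lemma one_add_norm_le_mul {E : Type*} [NormedAddCommGroup E] (x y : E) :
    1 + ‖x‖ ≤ (1 + ‖x - y‖) * (1 + ‖y‖) := by
  have h : ‖x‖ ≤ ‖x - y‖ + ‖y‖ := by simpa using norm_add_le (x - y) y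
  nlinarith [norm_nonneg (x - y), norm_nonneg y, mul_nonneg (norm_nonneg (x - y)) (norm_nonneg y)]

lemma exists_one_add_norm_pow_mul_iteratedFDeriv_le (g : 𝓢(Rn n, ℂ)) (k m : ℕ) :
    ∃ S : ℝ, 0 ≤ S ∧ ∀ x, (1 + ‖x‖) ^ k * ‖iteratedFDeriv ℝ m g x‖ ≤ S := by
  refine ⟨_, ?_, fun x => SchwartzMap.one_add_le_sup_seminorm_apply (𝕜 := ℂ) (m := (k, m))
    le_rfl le_rfl g x⟩
  positivity

lemma iteratedFDeriv_compSubConstCLM (g : 𝓢(Rn n, ℂ)) (z : Rn n) (m : ℕ) (x : Rn n) :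
    iteratedFDeriv ℝ m (SchwartzMap.compSubConstCLM ℂ z g) x = iteratedFDeriv ℝ m g (x - z) := by
  have : (⇑(SchwartzMap.compSubConstCLM ℂ z g) : Rn n → ℂ) = fun x => g (x - z) := by
    ext; simp
  rw [this, iteratedFDeriv_comp_sub]

/-- Schwartz seminorms of translates grow at most polynomially. -/
lemma seminorm_compSubConstCLM_le (g : 𝓢(Rn n, ℂ)) (k m : ℕ) :
    ∃ S : ℝ, 0 ≤ S ∧ ∀ z : Rn n,
      SchwartzMap.seminorm ℂ k m (SchwartzMap.compSubConstCLM ℂ z g) ≤ S * (1 + ‖z‖) ^ k := by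
  obtain ⟨S, hS, h⟩ := exists_one_add_norm_pow_mul_iteratedFDeriv_le g k m
  refine ⟨S, hS, fun z => SchwartzMap.seminorm_le_bound _ _ _ _ (by positivity) fun x => ?_⟩
  rw [iteratedFDeriv_compSubConstCLM]
  calc ‖x‖ ^ k * ‖iteratedFDeriv ℝ m g (x - z)‖
      ≤ ((1 + ‖x - z‖) * (1 + ‖z‖)) ^ k * ‖iteratedFDeriv ℝ m g (x - z)‖ := by
        gcongr
        linarith [one_add_norm_le_mul x z]
    _ = ((1 + ‖x - z‖) ^ k * ‖iteratedFDeriv ℝ m g (x - z)‖) * (1 + ‖z‖) ^ k := by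
        rw [mul_pow]; ring
    _ ≤ S * (1 + ‖z‖) ^ k := by gcongr; exact h _

/-- Translation is a continuous action on a fixed Schwartz function. -/
lemma continuous_compSubConstCLM (g : 𝓢(Rn n, ℂ)) :
    Continuous fun z : Rn n => SchwartzMap.compSubConstCLM ℂ z g := by
  rw [continuous_iff_continuousAt]
  intro w
  rw [ContinuousAt, (schwartz_withSeminorms ℂ (Rn n) ℂ).tendsto_nhds]
  rintro ⟨k, m⟩ ε hε
  obtain ⟨S, hS, h⟩ := exists_one_add_norm_pow_mul_iteratedFDeriv_le g k (m + 1)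
  set D := S * (2 + ‖w‖) ^ k with hD
  have hD0 : 0 ≤ D := by positivity
  have hball : ∀ᶠ z in 𝓝 w, dist z w < min 1 (ε / (D + 1)) :=
    Metric.eventually_nhds_iff.2 ⟨_, by positivity, fun _ h => h⟩
  filter_upwards [hball] with z hz
  have hz1 : ‖z - w‖ < 1 := by rw [← dist_eq_norm]; exact hz.trans_le (min_le_left _ _)
  have hz2 : ‖z - w‖ < ε / (D + 1) := by
    rw [← dist_eq_norm]; exact hz.trans_le (min_le_right _ _)
  refine lt_of_le_of_lt (b := D * ‖z - w‖) ?_ ?_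
  · refine SchwartzMap.seminorm_le_bound _ _ _ _ (by positivity) fun x => ?_
    have hsub : iteratedFDeriv ℝ m (SchwartzMap.compSubConstCLM ℂ z g
          - SchwartzMap.compSubConstCLM ℂ w g : 𝓢(Rn n, ℂ)) x
        = iteratedFDeriv ℝ m g (x - z) - iteratedFDeriv ℝ m g (x - w) := by
      rw [← iteratedFDeriv_compSubConstCLM, ← iteratedFDeriv_compSubConstCLM]
      exact iteratedFDeriv_sub_apply (SchwartzMap.contDiffAt _ m) (SchwartzMap.contDiffAt _ m)
    rw [hsub]
    have hmv := Convex.norm_image_sub_le_of_norm_fderiv_le (𝕜 := ℝ)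
      (f := iteratedFDeriv ℝ m g) (C := S * (2 + ‖w‖) ^ k / (1 + ‖x‖) ^ k)
      (s := Metric.ball (x - w) 1) (x := x - w) (y := x - z)
      (fun y _ => ((g.smooth ⊤).differentiable_iteratedFDeriv
        (by exact_mod_cast ENat.natCast_lt_top m)).differentiableAt)
      (fun y hy => ?_) (convex_ball _ _) (by simp) (by
        rw [Metric.mem_ball, dist_eq_norm]
        simpa [norm_sub_rev] using hz1)
    · have e : ‖x - z - (x - w)‖ = ‖z - w‖ := by
        rw [← norm_neg]; congr 1; abel
      rw [e] at hmv
      calc ‖x‖ ^ k * ‖iteratedFDeriv ℝ m g (x - z) - iteratedFDeriv ℝ m g (x - w)‖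
          ≤ (1 + ‖x‖) ^ k * (S * (2 + ‖w‖) ^ k / (1 + ‖x‖) ^ k * ‖z - w‖) := by
            gcongr
            linarith
        _ = D * ‖z - w‖ := by
            have : (1 + ‖x‖) ^ k ≠ 0 := by positivity
            rw [hD]; field_simp
    · rw [norm_fderiv_iteratedFDeriv, le_div_iff₀ (by positivity)]
      have hy' : ‖x - y‖ ≤ 1 + ‖w‖ := by
        have : ‖y - (x - w)‖ < 1 := by rwa [Metric.mem_ball, dist_eq_norm] at hy
        calc ‖x - y‖ = ‖w - (y - (x - w))‖ := by congr 1; abel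
          _ ≤ ‖w‖ + ‖y - (x - w)‖ := norm_sub_le _ _
          _ ≤ 1 + ‖w‖ := by linarith
      calc ‖iteratedFDeriv ℝ (m + 1) g y‖ * (1 + ‖x‖) ^ k
          ≤ ‖iteratedFDeriv ℝ (m + 1) g y‖ * ((2 + ‖w‖) * (1 + ‖y‖)) ^ k := by
            gcongr
            calc 1 + ‖x‖ ≤ (1 + ‖x - y‖) * (1 + ‖y‖) := one_add_norm_le_mul x y
              _ ≤ (2 + ‖w‖) * (1 + ‖y‖) :=
                mul_le_mul_of_nonneg_right (by linarith) (by positivity)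
        _ = ((1 + ‖y‖) ^ k * ‖iteratedFDeriv ℝ (m + 1) g y‖) * (2 + ‖w‖) ^ k := by
            rw [mul_pow]; ring
        _ ≤ S * (2 + ‖w‖) ^ k := by gcongr; exact h y
  · calc D * ‖z - w‖ ≤ (D + 1) * ‖z - w‖ := by gcongr; linarith
      _ < (D + 1) * (ε / (D + 1)) := by gcongr
      _ = ε := by field_simp

end Translation

section Convolution

/-- Bounded continuous functions into a normed group, with the metric induced by the norm. -/
abbrev NormedBCF (X F : Type*) [TopologicalSpace X] [NormedAddCommGroup F] : Type _ :=
  BoundedContinuousFunction X F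

/-- The weighted derivative `x ↦ ‖x‖ ^ k • D^m g x` as a bounded continuous function. -/
def weightedDeriv (k m : ℕ) :
    𝓢(Rn n, ℂ) →L[ℂ] NormedBCF (Rn n) ((Rn n) [×m]→L[ℝ] ℂ) :=
  SchwartzMap.mkCLMtoNormedSpace
    (fun g => BoundedContinuousFunction.ofNormedAddCommGroup
      (fun x => ‖x‖ ^ k • iteratedFDeriv ℝ m g x)
      ((continuous_norm.pow k).smul ((g.smooth ⊤).continuous_iteratedFDeriv
        (by exact_mod_cast (ENat.natCast_lt_top m).le)))
      (SchwartzMap.seminorm ℂ k m g)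
      (fun x => by
        rw [norm_smul, norm_pow, norm_norm]
        exact SchwartzMap.le_seminorm ℂ k m g x))
    (fun f g => by
      ext1 x
      change ‖x‖ ^ k • iteratedFDeriv ℝ m (⇑f + ⇑g) x = _
      rw [iteratedFDeriv_add_apply (f.contDiffAt m) (g.contDiffAt m), smul_add]
      rfl)
    (fun a f => by
      ext1 x
      change ‖x‖ ^ k • iteratedFDeriv ℝ m (a • ⇑f) x = _
      rw [iteratedFDeriv_const_smul_apply (f.contDiffAt m), smul_comm]
      rfl)
    ⟨{(k, m)}, 1, zero_le_one, fun f => by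
      rw [one_mul, Finset.sup_singleton]
      refine (BoundedContinuousFunction.norm_le (apply_nonneg _ _)).2 fun x => ?_
      change ‖‖x‖ ^ k • iteratedFDeriv ℝ m f x‖ ≤ _
      rw [norm_smul, norm_pow, norm_norm]
      exact SchwartzMap.le_seminorm ℂ k m f x⟩

lemma weightedDeriv_apply (k m : ℕ) (g : 𝓢(Rn n, ℂ)) (x : Rn n) :
    weightedDeriv k m g x = ‖x‖ ^ k • iteratedFDeriv ℝ m g x := rfl

lemma norm_weightedDeriv_le (k m : ℕ) (g : 𝓢(Rn n, ℂ)) :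
    ‖weightedDeriv k m g‖ ≤ SchwartzMap.seminorm ℂ k m g := by
  refine (BoundedContinuousFunction.norm_le (apply_nonneg _ _)).2 fun x => ?_
  rw [weightedDeriv_apply, norm_smul, norm_pow, norm_norm]
  exact SchwartzMap.le_seminorm ℂ k m g x

lemma seminorm_le_norm_weightedDeriv (k m : ℕ) (g : 𝓢(Rn n, ℂ)) :
    SchwartzMap.seminorm ℂ k m g ≤ ‖weightedDeriv k m g‖ := by
  refine SchwartzMap.seminorm_le_bound _ _ _ _ (norm_nonneg _) fun x => ?_
  have := (weightedDeriv k m g).norm_coe_le_norm x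
  rwa [weightedDeriv_apply, norm_smul, norm_pow, norm_norm] at this

lemma integrable_smul_weightedDeriv (k m : ℕ) (A g : 𝓢(Rn n, ℂ)) :
    Integrable fun z => A z • weightedDeriv k m (SchwartzMap.compSubConstCLM ℂ z g) := by
  obtain ⟨S, hS, h⟩ := seminorm_compSubConstCLM_le g k m
  have hint : Integrable fun z : Rn n => S * ((1 + ‖z‖) ^ k * ‖A z‖) := by
    have h0 := A.integrable_pow_mul volume 0
    have hk := A.integrable_pow_mul volume k
    have hmaj : Integrable fun z : Rn n => S * (2 ^ (k - 1) * (‖z‖ ^ 0 * ‖A z‖ + ‖z‖ ^ k * ‖A z‖)) :=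
      ((h0.add hk).const_mul _).const_mul _
    refine hmaj.mono' (by have := A.continuous; fun_prop) (Eventually.of_forall fun z => ?_)
    rw [Real.norm_of_nonneg (by positivity)]
    have := add_pow_le (zero_le_one' ℝ) (norm_nonneg z) k
    calc S * ((1 + ‖z‖) ^ k * ‖A z‖) ≤ S * ((2 ^ (k - 1) * (1 ^ k + ‖z‖ ^ k)) * ‖A z‖) := by gcongr
      _ = _ := by rw [one_pow, pow_zero]; ring
  refine hint.mono' ?_ (Eventually.of_forall fun z => ?_)
  · exact (A.continuous.smul ((weightedDeriv k m).continuous.comp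
      (continuous_compSubConstCLM g))).aestronglyMeasurable
  · rw [norm_smul]
    calc ‖A z‖ * _ ≤ ‖A z‖ * (S * (1 + ‖z‖) ^ k) := by
          gcongr; exact (norm_weightedDeriv_le _ _ _).trans (h z)
      _ = _ := by ring

/-- Convolution of Schwartz functions. -/
abbrev sconv (A g : 𝓢(Rn n, ℂ)) : 𝓢(Rn n, ℂ) :=
  SchwartzMap.convolution (ContinuousLinearMap.mul ℂ ℂ) A g

lemma sconv_apply (A g : 𝓢(Rn n, ℂ)) (x : Rn n) : sconv A g x = ∫ z, A z * g (x - z) := by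
  rw [SchwartzMap.convolution_apply]; rfl

lemma lineDeriv_sconv (A g : 𝓢(Rn n, ℂ)) (v : Rn n) : ∂_{v} (sconv A g) = sconv A (∂_{v} g) := by
  have hinj : Function.Injective (𝓕 : 𝓢(Rn n, ℂ) → 𝓢(Rn n, ℂ)) :=
    Function.LeftInverse.injective (g := 𝓕⁻) (fun f => by simp)
  apply hinj
  have hg : (fun x : Rn n => inner ℝ x v).HasTemperateGrowth := by fun_prop
  ext x
  simp only [SchwartzMap.fourier_lineDerivOp_eq, SchwartzMap.fourier_convolution,
    SchwartzMap.pairing_apply_apply, _root_.smul_apply,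
    SchwartzMap.smulLeftCLM_apply_apply hg, ContinuousLinearMap.mul_apply', Complex.real_smul,
    smul_eq_mul]
  ring

lemma iteratedFDeriv_sconv (A g : 𝓢(Rn n, ℂ)) (m : ℕ) (v : Fin m → Rn n) (x : Rn n) :
    iteratedFDeriv ℝ m (sconv A g) x v = ∫ z, A z * iteratedFDeriv ℝ m g (x - z) v := by
  have key : ∀ (m : ℕ) (v : Fin m → Rn n), ∂^{v} (sconv A g) = sconv A (∂^{v} g) := by
    intro m
    induction m with
    | zero => intro v; simp
    | succ m ih =>
      intro v
      rw [LineDeriv.iteratedLineDerivOp_succ_left, LineDeriv.iteratedLineDerivOp_succ_left, ih,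
        lineDeriv_sconv]
  rw [← SchwartzMap.iteratedLineDerivOp_eq_iteratedFDeriv, key, sconv_apply]
  simp_rw [SchwartzMap.iteratedLineDerivOp_eq_iteratedFDeriv]

lemma integral_smul_weightedDeriv (k m : ℕ) (A g : 𝓢(Rn n, ℂ)) :
    ∫ z, A z • weightedDeriv k m (SchwartzMap.compSubConstCLM ℂ z g)
      = weightedDeriv k m (sconv A g) := by
  have hint := integrable_smul_weightedDeriv k m A g
  ext1 x
  have h1 := (BoundedContinuousFunction.evalCLM ℝ x).integral_comp_comm hint
  have hi1 := (BoundedContinuousFunction.evalCLM ℝ x).integrable_comp hint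
  change _ = (∫ z, A z • weightedDeriv k m (SchwartzMap.compSubConstCLM ℂ z g)) x at h1
  rw [← h1]
  ext v
  have h2 := (ContinuousMultilinearMap.apply ℝ (fun _ : Fin m => Rn n) ℂ v).integral_comp_comm hi1
  refine h2.symm.trans ?_
  rw [weightedDeriv_apply, _root_.smul_apply, iteratedFDeriv_sconv,
    ← integral_smul]
  congr 1
  ext z
  change A z • (weightedDeriv k m (SchwartzMap.compSubConstCLM ℂ z g) x) v = _
  rw [weightedDeriv_apply, iteratedFDeriv_compSubConstCLM, _root_.smul_apply,
    smul_comm]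
  rfl

/-- A functional controlled by a linear map into a normed space factors through it. -/
lemma exists_strongDual_comp_eq {V W : Type*} [AddCommGroup V] [Module ℂ V]
    [NormedAddCommGroup W] [NormedSpace ℂ W] (L : V →ₗ[ℂ] ℂ) (T : V →ₗ[ℂ] W) (C : ℝ)
    (hT : ∀ g, ‖L g‖ ≤ C * ‖T g‖) : ∃ Λ : StrongDual ℂ W, ∀ g, Λ (T g) = L g := by
  have hker : LinearMap.ker T ≤ LinearMap.ker L := by
    intro g hg
    have := hT g
    rw [LinearMap.mem_ker.1 hg, norm_zero, mul_zero] at this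
    exact norm_le_zero_iff.1 this
  let e := T.quotKerEquivRange
  let ℓ : LinearMap.range T →ₗ[ℂ] ℂ :=
    ((LinearMap.ker T).liftQ L hker).comp e.symm.toLinearMap
  have hℓ : ∀ g, ℓ ⟨T g, g, rfl⟩ = L g := by
    intro g
    have : e.symm ⟨T g, g, rfl⟩ = Submodule.Quotient.mk g := by
      rw [LinearEquiv.symm_apply_eq]; rfl
    change ((LinearMap.ker T).liftQ L hker) (e.symm ⟨T g, g, rfl⟩) = _
    rw [this]; rfl
  let ℓc : StrongDual ℂ (LinearMap.range T) := ℓ.mkContinuous C (by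
    rintro ⟨_, g, rfl⟩
    exact (congrArg norm (hℓ g)).trans_le (hT g))
  obtain ⟨Λ, hΛ, -⟩ := exists_extension_norm_eq _ ℓc
  exact ⟨Λ, fun g => (hΛ ⟨T g, g, rfl⟩).trans (hℓ g)⟩

/-- Continuous functionals on Schwartz space commute with the convolution integral. -/
lemma clm_sconv (L : 𝓢(Rn n, ℂ) →L[ℂ] ℂ) (A g : 𝓢(Rn n, ℂ)) :
    L (sconv A g) = ∫ z, A z * L (SchwartzMap.compSubConstCLM ℂ z g) := by
  obtain ⟨s, C, -, hC⟩ := Seminorm.bound_of_continuous (schwartz_withSeminorms ℂ (Rn n) ℂ)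
    ((normSeminorm ℂ ℂ).comp L.toLinearMap) (continuous_norm.comp L.continuous)
  let T : 𝓢(Rn n, ℂ) →L[ℂ] (∀ i : s, NormedBCF (Rn n) ((Rn n) [×i.1.2]→L[ℝ] ℂ)) :=
    ContinuousLinearMap.pi fun i => weightedDeriv i.1.1 i.1.2
  have hT : ∀ g, ‖L g‖ ≤ C * ‖T g‖ := by
    intro g
    refine (hC g).trans ?_
    change (C : ℝ) * _ ≤ _
    gcongr
    refine Seminorm.finset_sup_apply_le (norm_nonneg _) fun i hi => ?_
    exact (seminorm_le_norm_weightedDeriv i.1 i.2 g).trans (norm_le_pi_norm (T g) ⟨i, hi⟩)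
  obtain ⟨Λ, hΛT⟩ := exists_strongDual_comp_eq L.toLinearMap T.toLinearMap C hT
  change ∀ g, Λ (T g) = L g at hΛT
  have hint : Integrable fun z => A z • T (SchwartzMap.compSubConstCLM ℂ z g) :=
    Integrable.of_eval fun i => integrable_smul_weightedDeriv i.1.1 i.1.2 A g
  have hTint : ∫ z, A z • T (SchwartzMap.compSubConstCLM ℂ z g) = T (sconv A g) := by
    funext i
    rw [eval_integral fun i => integrable_smul_weightedDeriv i.1.1 i.1.2 A g]
    exact integral_smul_weightedDeriv i.1.1 i.1.2 A g
  rw [← hΛT, ← hTint, ← Λ.integral_comp_comm hint]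
  simp_rw [map_smul, hΛT, smul_eq_mul]

end Convolution

section FourierProduct

lemma distConv_sconv (f : TemperedDist n) (A g : 𝓢(Rn n, ℂ)) (y : Rn n) :
    distConv (sconv A g) f y = ∫ z, A z * distConv g f (y - z) := by
  let L : 𝓢(Rn n, ℂ) →L[ℂ] ℂ := f.comp (SchwartzMap.compCLMOfAntilipschitz (𝕜 := ℂ) (K := 1)
    (hasTemperateGrowth_reflectTranslate y)
    ((Isometry.of_dist_eq (fun z z' => dist_sub_left y z z')).antilipschitz))
  have h := clm_sconv L A g
  refine h.trans (integral_congr_ae (Eventually.of_forall fun z => ?_))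
  change A z * f _ = A z * f _
  congr 2
  ext x
  change g (y - x - z) = g (y - z - x)
  congr 1
  abel

/-- Pointwise product of Schwartz functions. -/
abbrev smulSchwartz (g h : 𝓢(Rn n, ℂ)) : 𝓢(Rn n, ℂ) :=
  SchwartzMap.pairing (ContinuousLinearMap.mul ℂ ℂ) g h

lemma smulSchwartz_apply (g h : 𝓢(Rn n, ℂ)) (x : Rn n) : smulSchwartz g h x = g x * h x := rfl

lemma fourier_fourier_apply (g : 𝓢(Rn n, ℂ)) (x : Rn n) : 𝓕 (𝓕 g) x = g (-x) := by
  have h : 𝓕⁻ (𝓕 g) (-x) = g (-x) := by simp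
  rw [← h]
  rw [SchwartzMap.fourierInv_coe, Real.fourierInv_eq_fourier_neg, neg_neg, ← SchwartzMap.fourier_coe]

lemma fourier_smulSchwartz (g h : 𝓢(Rn n, ℂ)) : 𝓕 (smulSchwartz g h) = sconv (𝓕 g) (𝓕 h) := by
  have hinj : Function.Injective (𝓕 : 𝓢(Rn n, ℂ) → 𝓢(Rn n, ℂ)) :=
    Function.LeftInverse.injective (g := 𝓕⁻) (fun f => by simp)
  apply hinj
  ext x
  rw [fourier_fourier_apply, SchwartzMap.fourier_convolution]
  change g (-x) * h (-x) = 𝓕 (𝓕 g) x * 𝓕 (𝓕 h) x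
  rw [fourier_fourier_apply, fourier_fourier_apply]

lemma distConv_fourier_smulSchwartz (f : TemperedDist n) (g h : 𝓢(Rn n, ℂ)) (y : Rn n) :
    distConv (𝓕 (smulSchwartz g h)) f y = ∫ z, 𝓕 g z * distConv (𝓕 h) f (y - z) := by
  rw [fourier_smulSchwartz, distConv_sconv]

/-- Weighted `L¹` size of the Fourier transform of `g`. -/
def kernelNorm (a : ℝ) (g : 𝓢(Rn n, ℂ)) (ρ : ℝ) : ℝ≥0∞ :=
  ∫⁻ z, ‖𝓕 g z‖ₑ * ENNReal.ofReal (1 + (ρ * ‖z‖) ^ a)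

lemma kernelNorm_mono {a : ℝ} (ha : 0 < a) (g : 𝓢(Rn n, ℂ)) {ρ σ : ℝ} (hρ : 0 ≤ ρ) (h : ρ ≤ σ) :
    kernelNorm a g ρ ≤ kernelNorm a g σ := by
  unfold kernelNorm
  gcongr

/-- The Fourier transform of a dilation. -/
lemma kernelNorm_dilate (a : ℝ) {g h : 𝓢(Rn n, ℂ)} {t : ℝ} (ht : 0 < t)
    (hgh : ∀ x, g x = h (t • x)) (ρ : ℝ) : kernelNorm a g ρ = kernelNorm a h (ρ * t) := by
  have hF : ∀ z, 𝓕 g (t • z) = ((t ^ n)⁻¹ : ℝ) • 𝓕 h z := by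
    intro z
    rw [SchwartzMap.fourier_coe, SchwartzMap.fourier_coe, Real.fourier_eq', Real.fourier_eq']
    have := Measure.integral_comp_smul (volume : Measure (Rn n))
      (fun v => Complex.exp (↑(-2 * π * inner ℝ v z) * Complex.I) • h v) t
    rw [abs_of_pos (by positivity), finrank_euclideanSpace_fin] at this
    rw [← this]
    congr 1
    ext v
    simp only [hgh, inner_smul_left, inner_smul_right]
    simp
  set c : ℝ≥0∞ := ENNReal.ofReal (t ^ n)⁻¹ with hc
  have hc0 : c ≠ 0 := by
    rw [hc, Ne, ENNReal.ofReal_eq_zero, not_le]; positivity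
  have hmap : Measure.map (t • · : Rn n → Rn n) volume = c • volume := by
    rw [Measure.map_addHaar_smul volume ht.ne', finrank_euclideanSpace_fin,
      abs_of_pos (by positivity)]
  rw [← ENNReal.mul_right_inj hc0 ENNReal.ofReal_ne_top]
  unfold kernelNorm
  have hcont : Measurable fun z : Rn n => ‖𝓕 g z‖ₑ * ENNReal.ofReal (1 + (ρ * ‖z‖) ^ a) := by
    have := (𝓕 g).continuous.measurable
    fun_prop
  rw [← smul_eq_mul, ← lintegral_smul_measure, ← hmap, lintegral_map hcont (by fun_prop),
    ← lintegral_const_mul' _ _ ENNReal.ofReal_ne_top]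
  refine lintegral_congr fun z => ?_
  rw [hF, enorm_smul, Real.enorm_of_nonneg (by positivity), norm_smul, Real.norm_of_nonneg ht.le,
    mul_assoc, mul_assoc]

end FourierProduct

section KernelBound

/-- `kernelNorm` is controlled by finitely many Schwartz seminorms. -/
lemma exists_kernelNorm_le (n : ℕ) {a : ℝ} (ha : 0 < a) :
    ∃ (s : Finset (ℕ × ℕ)) (C : ℝ), 0 ≤ C ∧ ∀ (h : 𝓢(Rn n, ℂ)) (B : ℝ),
      (∀ i ∈ s, SchwartzMap.seminorm ℂ i.1 i.2 h ≤ B) → 0 ≤ B →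
        kernelNorm a h 2 ≤ ENNReal.ofReal (C * B) := by
  set m := ⌈a⌉₊ with hm
  set N := m + n + 1 with hN
  let F : 𝓢(Rn n, ℂ) →L[ℂ] 𝓢(Rn n, ℂ) := FourierTransform.fourierCLM ℂ 𝓢(Rn n, ℂ)
  let Q : Seminorm ℂ 𝓢(Rn n, ℂ) := (SchwartzMap.seminorm ℂ 0 0 + SchwartzMap.seminorm ℂ N 0).comp
    F.toLinearMap
  have hQc : Continuous Q := by
    have h0 := (schwartz_withSeminorms ℂ (Rn n) ℂ).continuous_seminorm (0, 0)
    have h1 := (schwartz_withSeminorms ℂ (Rn n) ℂ).continuous_seminorm (N, 0)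
    exact (h0.add h1).comp F.continuous
  obtain ⟨s, C, -, hC⟩ := Seminorm.bound_of_continuous (schwartz_withSeminorms ℂ (Rn n) ℂ) Q hQc
  set I : ℝ := ∫ z : Rn n, (1 + ‖z‖) ^ (-((n : ℝ) + 1)) with hI
  have hint : Integrable fun z : Rn n => (1 + ‖z‖) ^ (-((n : ℝ) + 1)) :=
    integrable_one_add_norm (by simp)
  have hI0 : 0 ≤ I := integral_nonneg fun z => by positivity
  refine ⟨s, 2 ^ (m + 1) * 2 ^ (N - 1) * C * I, by positivity, fun h B hB hB0 => ?_⟩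
  have hQB : Q h ≤ C * B := by
    refine (hC h).trans ?_
    change (C : ℝ) * _ ≤ _
    gcongr
    exact Seminorm.finset_sup_apply_le hB0 hB
  have hpt : ∀ z : Rn n, ‖𝓕 h z‖ * (1 + (2 * ‖z‖) ^ a)
      ≤ 2 ^ (m + 1) * 2 ^ (N - 1) * C * B * (1 + ‖z‖) ^ (-((n : ℝ) + 1)) := by
    intro z
    have hz := norm_nonneg z
    have h1 : 1 + (2 * ‖z‖) ^ a ≤ 2 ^ (m + 1) * (1 + ‖z‖) ^ m := by
      have e1 : (2 * ‖z‖) ^ a ≤ (2 * (1 + ‖z‖)) ^ m := by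
        calc (2 * ‖z‖) ^ a ≤ (2 * (1 + ‖z‖)) ^ a := by gcongr; linarith
          _ ≤ (2 * (1 + ‖z‖)) ^ (m : ℝ) :=
            Real.rpow_le_rpow_of_exponent_le (by linarith) (Nat.le_ceil a)
          _ = _ := Real.rpow_natCast _ _
      have e2 : (1 : ℝ) ≤ (2 * (1 + ‖z‖)) ^ m := one_le_pow₀ (by linarith)
      rw [mul_pow] at e1 e2
      rw [pow_succ]
      linarith
    have h2 : (1 + ‖z‖) ^ N * ‖𝓕 h z‖ ≤ 2 ^ (N - 1) * (C * B) := by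
      have e0 := SchwartzMap.norm_le_seminorm ℂ (𝓕 h) z
      have e1 := SchwartzMap.norm_pow_mul_le_seminorm ℂ (𝓕 h) N z
      calc (1 + ‖z‖) ^ N * ‖𝓕 h z‖ ≤ (2 ^ (N - 1) * (1 ^ N + ‖z‖ ^ N)) * ‖𝓕 h z‖ := by
            gcongr; exact add_pow_le zero_le_one hz N
        _ = 2 ^ (N - 1) * (‖𝓕 h z‖ + ‖z‖ ^ N * ‖𝓕 h z‖) := by rw [one_pow]; ring
        _ ≤ 2 ^ (N - 1) * (C * B) := by
            gcongr
            exact (add_le_add e0 e1).trans hQB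
    have hpos : (0 : ℝ) < (1 + ‖z‖) ^ (n + 1) := by positivity
    have e : (1 + ‖z‖) ^ (-((n : ℝ) + 1)) = ((1 + ‖z‖) ^ (n + 1))⁻¹ := by
      rw [Real.rpow_neg (by positivity)]
      congr 1
      exact_mod_cast Real.rpow_natCast (1 + ‖z‖) (n + 1)
    rw [e, ← div_eq_mul_inv, le_div_iff₀ hpos]
    calc ‖𝓕 h z‖ * (1 + (2 * ‖z‖) ^ a) * (1 + ‖z‖) ^ (n + 1)
        ≤ ‖𝓕 h z‖ * (2 ^ (m + 1) * (1 + ‖z‖) ^ m) * (1 + ‖z‖) ^ (n + 1) := by gcongr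
      _ = 2 ^ (m + 1) * ((1 + ‖z‖) ^ N * ‖𝓕 h z‖) := by rw [hN, add_assoc, pow_add]; ring
      _ ≤ 2 ^ (m + 1) * (2 ^ (N - 1) * (C * B)) := by gcongr
      _ = _ := by ring
  unfold kernelNorm
  calc ∫⁻ z, ‖𝓕 h z‖ₑ * ENNReal.ofReal (1 + (2 * ‖z‖) ^ a)
      ≤ ∫⁻ z : Rn n, ENNReal.ofReal
          (2 ^ (m + 1) * 2 ^ (N - 1) * C * B * (1 + ‖z‖) ^ (-((n : ℝ) + 1))) := by
        refine lintegral_mono fun z => ?_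
        rw [← ofReal_norm, ← ENNReal.ofReal_mul (norm_nonneg _)]
        exact ENNReal.ofReal_le_ofReal (hpt z)
    _ = ENNReal.ofReal (2 ^ (m + 1) * 2 ^ (N - 1) * C * B * I) := by
        rw [← ofReal_integral_eq_lintegral_ofReal (hint.const_mul _)
          (Eventually.of_forall fun z => by positivity), integral_const_mul]
    _ = _ := by congr 1; ring

end KernelBound

section DilatedProducts

/-- A Schwartz function with vanishing moments up to order `R` decays to order `R` at the origin. -/
lemma exists_norm_iteratedFDeriv_le_pow (ψ : 𝓢(Rn n, ℂ)) (R : ℕ)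
    (hmom : ∀ m < R, iteratedFDeriv ℝ m ψ 0 = 0) :
    ∃ C : ℝ, 0 ≤ C ∧ ∀ i ≤ R, ∀ y : Rn n, ‖iteratedFDeriv ℝ i ψ y‖ ≤ C * ‖y‖ ^ (R - i) := by
  refine ⟨SchwartzMap.seminorm ℂ 0 R ψ, apply_nonneg _ _, fun i hi => ?_⟩
  induction hi using Nat.decreasingInduction with
  | self =>
    intro y
    simpa using SchwartzMap.le_seminorm ℂ 0 R ψ y
  | of_succ i hi ih =>
    intro y
    have hmv := Convex.norm_image_sub_le_of_norm_fderiv_le (𝕜 := ℝ)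
      (f := iteratedFDeriv ℝ i ψ) (C := SchwartzMap.seminorm ℂ 0 R ψ * ‖y‖ ^ (R - (i + 1)))
      (s := Metric.closedBall 0 ‖y‖) (x := 0) (y := y)
      (fun y _ => ((ψ.smooth ⊤).differentiable_iteratedFDeriv
        (by exact_mod_cast ENat.natCast_lt_top i)).differentiableAt)
      (fun z hz => ?_) (convex_closedBall _ _) (by simp) (by simp)
    · rw [hmom i hi, sub_zero, sub_zero, mul_assoc, ← pow_succ] at hmv
      rwa [show R - i = R - (i + 1) + 1 by omega]
    · rw [norm_fderiv_iteratedFDeriv]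
      have hz' : ‖z‖ ≤ ‖y‖ := by simpa using hz
      refine (ih z).trans ?_
      gcongr

lemma norm_iteratedFDeriv_dilate_mul_le (ψ : 𝓢(Rn n, ℂ)) {μ : Rn n → ℂ} (hμ : ContDiff ℝ (⊤ : ℕ∞) μ)
    {s : ℝ} (hs : 0 ≤ s) (m : ℕ) (x : Rn n) :
    ‖iteratedFDeriv ℝ m (fun y => ψ (s • y) * μ y) x‖ ≤ ∑ i ∈ Finset.range (m + 1),
      (m.choose i : ℝ) * (s ^ i * ‖iteratedFDeriv ℝ i ψ (s • x)‖) * ‖iteratedFDeriv ℝ (m - i) μ x‖ := by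
  have hψ : ContDiff ℝ (⊤ : ℕ∞) fun y => ψ (s • y) := (ψ.smooth ⊤).comp (contDiff_const_smul s)
  refine (norm_iteratedFDeriv_mul_le hψ hμ x (by exact_mod_cast le_top)).trans
    (Finset.sum_le_sum fun i _ => le_of_eq ?_)
  rw [iteratedFDeriv_comp_const_smul s ((ψ.smooth ⊤).of_le (by exact_mod_cast le_top)), norm_smul,
    norm_pow, Real.norm_of_nonneg hs]

/-- Small dilations: vanishing moments give smallness. -/
lemma exists_dilate_mul_le_of_moments (ψ lam : 𝓢(Rn n, ℂ)) (R : ℕ)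
    (hmom : ∀ m < R, iteratedFDeriv ℝ m ψ 0 = 0) (k m : ℕ) :
    ∃ C : ℝ, 0 ≤ C ∧ ∀ s : ℝ, 0 < s → s ≤ 1 → ∀ x : Rn n,
      ‖x‖ ^ k * ‖iteratedFDeriv ℝ m (fun y => ψ (s • y) * lam y) x‖ ≤ C * s ^ R := by
  obtain ⟨C, hC, h⟩ := exists_norm_iteratedFDeriv_le_pow ψ R hmom
  refine ⟨∑ i ∈ Finset.range (m + 1), (m.choose i : ℝ) *
    (C * SchwartzMap.seminorm ℂ (k + (R - i)) (m - i) lam +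
      SchwartzMap.seminorm ℂ 0 i ψ * SchwartzMap.seminorm ℂ k (m - i) lam), ?_, fun s hs hs1 x => ?_⟩
  · positivity
  refine (mul_le_mul_of_nonneg_left
    (norm_iteratedFDeriv_dilate_mul_le ψ (lam.smooth ⊤) hs.le m x) (by positivity)).trans ?_
  rw [Finset.mul_sum, Finset.sum_mul]
  refine Finset.sum_le_sum fun i _ => ?_
  have hA := SchwartzMap.le_seminorm ℂ (k + (R - i)) (m - i) lam x
  have hB := SchwartzMap.le_seminorm ℂ k (m - i) lam x
  have hD := SchwartzMap.le_seminorm ℂ 0 i ψ (s • x)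
  rw [pow_zero, one_mul] at hD
  have hA0 := apply_nonneg (SchwartzMap.seminorm ℂ (k + (R - i)) (m - i)) lam
  have hB0 := apply_nonneg (SchwartzMap.seminorm ℂ k (m - i)) lam
  have hD0 := apply_nonneg (SchwartzMap.seminorm ℂ 0 i) ψ
  rw [show ∀ c A B : ℝ, ‖x‖ ^ k * (c * A * B) = c * (A * (‖x‖ ^ k * B)) by intros; ring,
    mul_assoc (m.choose i : ℝ) _ (s ^ R)]
  refine mul_le_mul_of_nonneg_left ?_ (Nat.cast_nonneg _)
  rcases le_or_gt i R with hi | hi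
  · calc s ^ i * ‖iteratedFDeriv ℝ i ψ (s • x)‖ * (‖x‖ ^ k * ‖iteratedFDeriv ℝ (m - i) lam x‖)
        ≤ s ^ i * (C * ‖s • x‖ ^ (R - i)) * (‖x‖ ^ k * ‖iteratedFDeriv ℝ (m - i) lam x‖) := by
          gcongr
          exact h i hi _
      _ = C * (‖x‖ ^ (k + (R - i)) * ‖iteratedFDeriv ℝ (m - i) lam x‖) * (s ^ i * s ^ (R - i)) := by
          rw [norm_smul, Real.norm_of_nonneg hs.le, mul_pow, pow_add]; ring
      _ ≤ C * SchwartzMap.seminorm ℂ (k + (R - i)) (m - i) lam * s ^ R := by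
          rw [← pow_add, Nat.add_sub_cancel' hi]
          gcongr
      _ ≤ _ := by
          gcongr
          exact le_add_of_nonneg_right (mul_nonneg hD0 hB0)
  · calc s ^ i * ‖iteratedFDeriv ℝ i ψ (s • x)‖ * (‖x‖ ^ k * ‖iteratedFDeriv ℝ (m - i) lam x‖)
        ≤ s ^ R * SchwartzMap.seminorm ℂ 0 i ψ * SchwartzMap.seminorm ℂ k (m - i) lam := by
          gcongr ?_ * ?_ * ?_
          exact pow_le_pow_of_le_one hs.le hs1 hi.le
      _ = SchwartzMap.seminorm ℂ 0 i ψ * SchwartzMap.seminorm ℂ k (m - i) lam * s ^ R := by ring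
      _ ≤ _ := by
          gcongr
          exact le_add_of_nonneg_left (mul_nonneg hC hA0)

/-- Large dilations: products with a function vanishing near the origin are small. -/
lemma exists_dilate_mul_le_of_vanishing (ψ : 𝓢(Rn n, ℂ)) {μ : Rn n → ℂ}
    (hμ : ContDiff ℝ (⊤ : ℕ∞) μ) (hbd : ∀ j, ∃ B, ∀ x, ‖iteratedFDeriv ℝ j μ x‖ ≤ B) {r : ℝ}
    (hr : 0 < r) (hμ0 : ∀ x, ‖x‖ < r → μ x = 0) (M k m : ℕ) :
    ∃ C : ℝ, 0 ≤ C ∧ ∀ s : ℝ, 1 ≤ s → ∀ x : Rn n,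
      ‖x‖ ^ k * ‖iteratedFDeriv ℝ m (fun y => ψ (s • y) * μ y) x‖ ≤ C * (s ^ M)⁻¹ := by
  choose B hB using hbd
  have hB0 : ∀ j, 0 ≤ B j := fun j => (norm_nonneg _).trans (hB j 0)
  set K := M + m + k with hK
  refine ⟨∑ i ∈ Finset.range (m + 1), (m.choose i : ℝ) *
    (SchwartzMap.seminorm ℂ K i ψ * (r ^ (M + m))⁻¹ * B (m - i)), ?_, fun s hs x => ?_⟩
  · exact Finset.sum_nonneg fun i _ => by have := hB0 (m - i); positivity
  have hs0 : 0 < s := by linarith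
  rcases lt_or_ge ‖x‖ r with hx | hx
  · have : (fun y => ψ (s • y) * μ y) =ᶠ[𝓝 x] fun _ => 0 := by
      filter_upwards [(Metric.isOpen_ball (x := (0 : Rn n)) (ε := r)).mem_nhds (by simpa using hx)]
        with y hy
      rw [hμ0 y (by simpa using hy), mul_zero]
    rw [(this.iteratedFDeriv ℝ m).eq_of_nhds]
    simp only [iteratedFDeriv_fun_zero]
    have : 0 ≤ ∑ i ∈ Finset.range (m + 1), (m.choose i : ℝ) *
      (SchwartzMap.seminorm ℂ K i ψ * (r ^ (M + m))⁻¹ * B (m - i)) :=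
      Finset.sum_nonneg fun i _ => by have := hB0 (m - i); positivity
    simpa using mul_nonneg this (inv_nonneg.2 (pow_nonneg hs0.le M))
  have hx0 : 0 < ‖x‖ := hr.trans_le hx
  refine (mul_le_mul_of_nonneg_left
    (norm_iteratedFDeriv_dilate_mul_le ψ hμ hs0.le m x) (by positivity)).trans ?_
  rw [Finset.mul_sum, Finset.sum_mul]
  refine Finset.sum_le_sum fun i hi => ?_
  have him : i ≤ m := by simpa [Nat.lt_succ_iff] using hi
  have hD := SchwartzMap.le_seminorm ℂ K i ψ (s • x)
  rw [norm_smul, Real.norm_of_nonneg hs0.le, ← le_div_iff₀' (by positivity)] at hD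
  have hD0 := apply_nonneg (SchwartzMap.seminorm ℂ K i) ψ
  have hB1 := hB0 (m - i)
  rw [show ∀ c A B : ℝ, ‖x‖ ^ k * (c * A * B) = c * (A * ‖x‖ ^ k * B) by intros; ring,
    mul_assoc (m.choose i : ℝ) _ (s ^ M)⁻¹]
  refine mul_le_mul_of_nonneg_left ?_ (Nat.cast_nonneg _)
  calc s ^ i * ‖iteratedFDeriv ℝ i ψ (s • x)‖ * ‖x‖ ^ k * ‖iteratedFDeriv ℝ (m - i) μ x‖
      ≤ s ^ i * (SchwartzMap.seminorm ℂ K i ψ / (s * ‖x‖) ^ K) * ‖x‖ ^ k * B (m - i) := by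
        gcongr
        exact hB _ _
    _ = SchwartzMap.seminorm ℂ K i ψ * (‖x‖ ^ (M + m))⁻¹ * B (m - i) * (s ^ i / s ^ (M + m + k)) := by
        rw [mul_pow, hK, pow_add _ (M + m) k, pow_add ‖x‖ (M + m) k]
        field_simp
    _ ≤ SchwartzMap.seminorm ℂ K i ψ * (r ^ (M + m))⁻¹ * B (m - i) * (s ^ M)⁻¹ := by
        gcongr
        rw [div_le_iff₀ (by positivity), inv_mul_eq_div, le_div_iff₀ (by positivity), ← pow_add]
        exact pow_le_pow_right₀ hs (by omega)

end DilatedProducts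

section Partition

/-- Dilation `x ↦ h (t • x)` of a Schwartz function. -/
lemma exists_schwartz_dilate (h : 𝓢(Rn n, ℂ)) {t : ℝ} (ht : t ≠ 0) :
    ∃ g : 𝓢(Rn n, ℂ), ∀ x, g x = h (t • x) :=
  ⟨SchwartzMap.compCLMOfContinuousLinearEquiv ℂ
    (ContinuousLinearEquiv.smulLeft (Units.mk0 t ht) : Rn n ≃L[ℝ] Rn n) h, fun _ => rfl⟩

/-- Division of a smooth function by a Schwartz function with no zeros on a closed set which
is contained in a ball and carries the smooth function. -/
lemma exists_schwartz_div (θ φ : 𝓢(Rn n, ℂ)) (K : Set (Rn n)) (hK : IsClosed K) {ρ : ℝ}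
    (hKρ : K ⊆ Metric.closedBall 0 ρ) (hθ : ∀ x ∉ K, θ x = 0) (hφ : ∀ x ∈ K, φ x ≠ 0) :
    ∃ lam : 𝓢(Rn n, ℂ), (∀ x, lam x * φ x = θ x) ∧ ∀ x, θ x = 0 → lam x = 0 := by
  have hsupp : HasCompactSupport fun x => θ x / φ x := by
    refine HasCompactSupport.intro (isCompact_closedBall (0 : Rn n) ρ) fun x hx => ?_
    rw [hθ x fun h => hx (hKρ h), zero_div]
  have hsmooth : ContDiff ℝ (⊤ : ℕ∞) fun x => θ x / φ x := by
    rw [contDiff_iff_contDiffAt]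
    intro x
    by_cases hx : x ∈ K
    · simp_rw [div_eq_mul_inv]
      exact (θ.smooth ⊤).contDiffAt.mul ((φ.smooth ⊤).contDiffAt.inv (hφ x hx))
    · refine (contDiffAt_const (c := (0 : ℂ))).congr_of_eventuallyEq ?_
      filter_upwards [hK.isOpen_compl.mem_nhds hx] with y hy
      rw [hθ y hy, zero_div]
  refine ⟨hsupp.toSchwartzMap hsmooth, fun x => ?_, fun x hx => ?_⟩
  · change θ x / φ x * φ x = θ x
    by_cases hx : x ∈ K
    · exact div_mul_cancel₀ _ (hφ x hx)
    · rw [hθ x hx, zero_div, zero_mul]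
  · change θ x / φ x = 0
    rw [hx, zero_div]

/-- A Calderón type resolution of unity generated by a pair satisfying Tauberian conditions. -/
lemma exists_resolution (phi0 phi1 : 𝓢(Rn n, ℂ)) (eps k : ℝ) (heps : 0 < eps) (hk1 : 1 < k)
    (hphi0 : ∀ x : Rn n, ‖x‖ ≤ k * eps → 0 < ‖phi0 x‖)
    (hphi1 : ∀ x : Rn n, eps ≤ ‖x‖ → ‖x‖ ≤ 2 * k * eps → 0 < ‖phi1 x‖) :
    ∃ χ lam0 lam1 : 𝓢(Rn n, ℂ), (∀ x, ‖x‖ < eps → χ x = 1) ∧ (∀ x, lam0 x * phi0 x = χ x) ∧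
      (∀ x, lam1 x * phi1 x = χ ((2⁻¹ : ℝ) • x) - χ x) ∧ ∀ x, ‖x‖ < eps → lam1 x = 0 := by
  have hke : eps < k * eps := by nlinarith
  let b : ContDiffBump (0 : Rn n) := ⟨eps, k * eps, heps, hke⟩
  have hsm : ContDiff ℝ (⊤ : ℕ∞) fun x => (b x : ℂ) := Complex.ofRealCLM.contDiff.comp b.contDiff
  have hcs : HasCompactSupport fun x => (b x : ℂ) :=
    b.hasCompactSupport.comp_left (g := fun r : ℝ => (r : ℂ)) Complex.ofReal_zero
  let χ : 𝓢(Rn n, ℂ) := hcs.toSchwartzMap hsm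
  have hχ1 : ∀ x, ‖x‖ ≤ eps → χ x = 1 := fun x hx => by
    change (b x : ℂ) = 1
    rw [b.one_of_mem_closedBall (by simpa using hx), Complex.ofReal_one]
  have hχ0 : ∀ x, k * eps ≤ ‖x‖ → χ x = 0 := fun x hx => by
    change (b x : ℂ) = 0
    rw [b.zero_of_le_dist (by simpa using hx), Complex.ofReal_zero]
  obtain ⟨χ2, hχ2⟩ := exists_schwartz_dilate χ (t := 2⁻¹) (by norm_num)
  obtain ⟨lam0, hlam0, -⟩ := exists_schwartz_div χ phi0 (Metric.closedBall 0 (k * eps))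
    Metric.isClosed_closedBall le_rfl (fun x hx => hχ0 x (le_of_lt (by simpa using hx)))
    (fun x hx => norm_pos_iff.1 (hphi0 x (by simpa using hx)))
  have hθ : ∀ x, ‖x‖ < eps → (χ2 - χ) x = 0 := fun x hx => by
    have : ‖(2⁻¹ : ℝ) • x‖ ≤ eps := by
      rw [norm_smul, Real.norm_of_nonneg (by norm_num)]
      linarith [norm_nonneg x]
    rw [_root_.sub_apply, hχ2, hχ1 x hx.le, hχ1 _ this, sub_self]
  obtain ⟨lam1, hlam1, hlam1'⟩ := exists_schwartz_div (χ2 - χ) phi1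
    {x | eps ≤ ‖x‖ ∧ ‖x‖ ≤ 2 * k * eps}
    ((isClosed_le continuous_const continuous_norm).inter
      (isClosed_le continuous_norm continuous_const)) (ρ := 2 * k * eps)
    (fun x hx => by simpa using hx.2)
    (fun x hx => by
      rcases lt_or_ge ‖x‖ eps with h | h
      · exact hθ x h
      · have h2 : 2 * k * eps < ‖x‖ := not_le.1 fun h' => hx ⟨h, h'⟩
        have h3 : k * eps ≤ ‖(2⁻¹ : ℝ) • x‖ := by
          rw [norm_smul, Real.norm_of_nonneg (by norm_num)]
          linarith
        rw [_root_.sub_apply, hχ2, hχ0 _ h3, hχ0 x (by nlinarith), sub_self])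
    (fun x hx => norm_pos_iff.1 (hphi1 x hx.1 hx.2))
  refine ⟨χ, lam0, lam1, fun x hx => hχ1 x hx.le, hlam0, fun x => ?_, fun x hx => hlam1' x (hθ x hx)⟩
  rw [hlam1, _root_.sub_apply, hχ2]

/-- Dilated cutoffs converge in the Schwartz topology. -/
lemma tendsto_cutoff (χ ψ : 𝓢(Rn n, ℂ)) {r : ℝ} (hr : 0 < r) (hχ : ∀ x, ‖x‖ < r → χ x = 1)
    (P : ℕ → 𝓢(Rn n, ℂ)) (hP : ∀ J x, P J x = χ (((2 : ℝ) ^ J)⁻¹ • x) * ψ x) :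
    Tendsto P atTop (𝓝 ψ) := by
  rw [(schwartz_withSeminorms ℂ (Rn n) ℂ).tendsto_nhds]
  rintro ⟨k, m⟩ ε hε
  have hμ : ContDiff ℝ (⊤ : ℕ∞) fun x => χ x - 1 := (χ.smooth ⊤).sub contDiff_const
  obtain ⟨C, hC, h⟩ := exists_dilate_mul_le_of_vanishing ψ hμ (fun j => by
    rcases j with - | j
    · refine ⟨SchwartzMap.seminorm ℂ 0 0 χ + 1, fun x => ?_⟩
      rw [norm_iteratedFDeriv_zero]
      refine (norm_sub_le _ _).trans ?_
      rw [norm_one]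
      gcongr
      exact SchwartzMap.norm_le_seminorm ℂ χ x
    · refine ⟨SchwartzMap.seminorm ℂ 0 (j + 1) χ, fun x => ?_⟩
      have e : iteratedFDeriv ℝ (j + 1) (fun x => χ x - 1) x = iteratedFDeriv ℝ (j + 1) χ x := by
        rw [← Pi.sub_def (⇑χ) (fun _ => (1 : ℂ)),
          iteratedFDeriv_sub_apply (χ.contDiffAt _) contDiffAt_const,
          iteratedFDeriv_const_of_ne (Nat.succ_ne_zero j)]
        simp
      rw [e]
      simpa using SchwartzMap.le_seminorm ℂ 0 (j + 1) χ x) hr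
    (fun x hx => by rw [hχ x hx, sub_self]) (k + 1) k m
  have hbound : ∀ J, SchwartzMap.seminorm ℂ k m (P J - ψ) ≤ C * (2⁻¹ : ℝ) ^ J := by
    intro J
    refine SchwartzMap.seminorm_le_bound _ _ _ _ (by positivity) fun x => ?_
    set s : ℝ := 2 ^ J with hs
    have hs1 : 1 ≤ s := one_le_pow₀ one_le_two
    have hs0 : 0 < s := by linarith
    have hfun : (⇑(P J - ψ) : Rn n → ℂ)
        = fun x => (fun y => ψ (s • y) * (χ y - 1)) (s⁻¹ • x) := by
      ext y
      rw [_root_.sub_apply, hP, ← hs]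
      change _ = ψ (s • s⁻¹ • y) * (χ (s⁻¹ • y) - 1)
      rw [smul_inv_smul₀ hs0.ne']
      ring
    have hG : ContDiff ℝ (⊤ : ℕ∞) fun y => ψ (s • y) * (χ y - 1) :=
      ((ψ.smooth ⊤).comp (contDiff_const_smul s)).mul hμ
    rw [hfun, iteratedFDeriv_comp_const_smul _ (hG.of_le (by exact_mod_cast le_top)), norm_smul,
      norm_pow, Real.norm_of_nonneg (by positivity)]
    have hx := h s hs1 (s⁻¹ • x)
    rw [norm_smul, Real.norm_of_nonneg (by positivity), mul_pow] at hx
    set D := ‖iteratedFDeriv ℝ m (fun y => ψ (s • y) * (χ y - 1)) (s⁻¹ • x)‖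
    have hD : 0 ≤ D := norm_nonneg _
    calc ‖x‖ ^ k * (s⁻¹ ^ m * D) ≤ ‖x‖ ^ k * (1 * D) := by
          gcongr
          exact pow_le_one₀ (by positivity) (inv_le_one_of_one_le₀ hs1)
      _ = s ^ k * (s⁻¹ ^ k * ‖x‖ ^ k * D) := by
          rw [inv_pow]; field_simp
      _ ≤ s ^ k * (C * (s ^ (k + 1))⁻¹) := by gcongr
      _ = C * s⁻¹ := by rw [pow_succ]; field_simp
      _ = C * (2⁻¹ : ℝ) ^ J := by rw [hs, inv_pow]
  have hlim : Tendsto (fun J : ℕ => C * (2⁻¹ : ℝ) ^ J) atTop (𝓝 0) := by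
    simpa using (tendsto_pow_atTop_nhds_zero_of_lt_one (r := (2⁻¹ : ℝ)) (by norm_num)
      (by norm_num)).const_mul C
  filter_upwards [hlim.eventually_lt_const hε] with J hJ
  exact (hbound J).trans_lt hJ

end Partition

section KernelDecay

/-- Uniform seminorm bounds for a family of Schwartz functions bound its kernel norms. -/
lemma exists_kernelNorm_le_of_family {a : ℝ} (ha : 0 < a) {S : Set ℝ} (F : ℝ → Rn n → ℂ)
    (b : ℝ → ℝ) (hb : ∀ s ∈ S, 0 ≤ b s)
    (hF : ∀ k m : ℕ, ∃ C : ℝ, 0 ≤ C ∧ ∀ s ∈ S, ∀ x, ‖x‖ ^ k * ‖iteratedFDeriv ℝ m (F s) x‖ ≤ C * b s) :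
    ∃ C : ℝ, 0 ≤ C ∧ ∀ s ∈ S, ∀ h : 𝓢(Rn n, ℂ), (∀ x, h x = F s x) →
      kernelNorm a h 2 ≤ ENNReal.ofReal (C * b s) := by
  obtain ⟨I, C, hC, hK⟩ := exists_kernelNorm_le n ha
  choose D hD0 hD using hF
  refine ⟨C * ∑ i ∈ I, D i.1 i.2, mul_nonneg hC (Finset.sum_nonneg fun i _ => hD0 _ _),
    fun s hs h hh => ?_⟩
  rw [mul_assoc]
  refine hK h _ (fun i hi => ?_)
    (mul_nonneg (Finset.sum_nonneg fun i _ => hD0 _ _) (hb s hs))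
  refine SchwartzMap.seminorm_le_bound _ _ _ _
    (mul_nonneg (Finset.sum_nonneg fun i _ => hD0 _ _) (hb s hs)) fun x => ?_
  rw [show (⇑h : Rn n → ℂ) = F s from funext hh]
  refine (hD i.1 i.2 s hs x).trans (mul_le_mul_of_nonneg_right ?_ (hb s hs))
  exact Finset.single_le_sum (f := fun i : ℕ × ℕ => D i.1 i.2) (fun i _ => hD0 _ _) hi

/-- The dyadic dilation factor of the `j`-th member of a resolution, `j ≥ 1`. -/
lemma two_rpow_neg_add_one (j : ℕ) : (2 : ℝ) ^ (-(j : ℝ) + 1) = 2 / 2 ^ j := by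
  rw [Real.rpow_add two_pos, Real.rpow_neg two_pos.le, Real.rpow_natCast, Real.rpow_one]
  field_simp

/-- Decay of `ψ_ν λ_κ` away from the diagonal. -/
def offDiag (R M ν κ : ℕ) : ℝ :=
  if κ ≤ ν then (((2 : ℝ) ^ κ / 2 ^ ν)) ^ R else (((2 : ℝ) ^ κ / 2 ^ ν) ^ M)⁻¹

lemma exists_kernelNorm_smul_le {a : ℝ} (ha : 0 < a) (R M : ℕ) (psi0 psi1 lam0 lam1 : 𝓢(Rn n, ℂ))
    (hmom : ∀ m < R, iteratedFDeriv ℝ m psi1 0 = 0) {r : ℝ} (hr : 0 < r)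
    (hlam1 : ∀ x, ‖x‖ < r → lam1 x = 0) (psis lams : ℕ → 𝓢(Rn n, ℂ)) (hpsi0 : psis 0 = psi0)
    (hpsi : ∀ j, 1 ≤ j → ∀ x, psis j x = psi1 (((2 : ℝ) / 2 ^ j) • x)) (hlam0 : lams 0 = lam0)
    (hlam : ∀ j, 1 ≤ j → ∀ x, lams j x = lam1 (((2 : ℝ) / 2 ^ j) • x)) :
    ∃ C : ℝ, 0 ≤ C ∧ ∀ ν κ : ℕ, kernelNorm a (smulSchwartz (psis ν) (lams κ)) (2 ^ κ) ≤
      ENNReal.ofReal (C * offDiag R M ν κ) := by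
  have hsmall : ∀ lam : 𝓢(Rn n, ℂ), ∃ C : ℝ, 0 ≤ C ∧ ∀ s ∈ Set.Ioc (0 : ℝ) 1, ∀ h : 𝓢(Rn n, ℂ),
      (∀ x, h x = psi1 (s • x) * lam x) → kernelNorm a h 2 ≤ ENNReal.ofReal (C * s ^ R) := fun lam =>
    exists_kernelNorm_le_of_family ha (fun s x => psi1 (s • x) * lam x) (fun s => s ^ R)
      (fun s hs => pow_nonneg hs.1.le _) fun k m => by
        obtain ⟨C, hC, h⟩ := exists_dilate_mul_le_of_moments psi1 lam R hmom k m
        exact ⟨C, hC, fun s hs => h s hs.1 hs.2⟩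
  have hlarge : ∀ ψ : 𝓢(Rn n, ℂ), ∃ C : ℝ, 0 ≤ C ∧ ∀ s ∈ Set.Ici (1 : ℝ), ∀ h : 𝓢(Rn n, ℂ),
      (∀ x, h x = ψ (s • x) * lam1 x) → kernelNorm a h 2 ≤ ENNReal.ofReal (C * (s ^ M)⁻¹) := fun ψ =>
    exists_kernelNorm_le_of_family ha (fun s x => ψ (s • x) * lam1 x) (fun s => (s ^ M)⁻¹)
      (fun s hs => inv_nonneg.2 (pow_nonneg (zero_le_one.trans hs) _)) fun k m =>
        exists_dilate_mul_le_of_vanishing ψ (lam1.smooth ⊤)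
          (fun j => ⟨_, fun x => by simpa using SchwartzMap.le_seminorm ℂ 0 j lam1 x⟩) hr hlam1 M k m
  obtain ⟨C1, hC1, h1⟩ := hsmall lam1
  obtain ⟨C2, hC2, h2⟩ := hsmall lam0
  obtain ⟨C3, hC3, h3⟩ := hlarge psi1
  obtain ⟨C4, hC4, h4⟩ := hlarge psi0
  obtain ⟨C5, hC5, h5⟩ : ∃ C : ℝ, 0 ≤ C ∧
      kernelNorm a (smulSchwartz psi0 lam0) 2 ≤ ENNReal.ofReal C := by
    obtain ⟨C, hC, h⟩ := exists_kernelNorm_le_of_family (n := n) ha (S := {1})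
      (fun _ => smulSchwartz psi0 lam0) (fun _ => 1) (by simp) fun k m =>
        ⟨SchwartzMap.seminorm ℂ k m (smulSchwartz psi0 lam0), apply_nonneg _ _, fun s _ x => by
          simpa using SchwartzMap.le_seminorm ℂ k m (smulSchwartz psi0 lam0) x⟩
    exact ⟨C, hC, by simpa using h 1 rfl (smulSchwartz psi0 lam0) fun _ => rfl⟩
  refine ⟨C1 + C2 * 2 ^ R + C3 + C4 * 2 ^ M + C5, by positivity, fun ν κ => ?_⟩
  have hβ : 0 ≤ offDiag R M ν κ := by unfold offDiag; split_ifs <;> positivity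
  have hle : ∀ {c : ℝ}, c ≤ C1 + C2 * 2 ^ R + C3 + C4 * 2 ^ M + C5 →
      ENNReal.ofReal (c * offDiag R M ν κ)
        ≤ ENNReal.ofReal ((C1 + C2 * 2 ^ R + C3 + C4 * 2 ^ M + C5) * offDiag R M ν κ) :=
    fun hc => ENNReal.ofReal_le_ofReal (mul_le_mul_of_nonneg_right hc hβ)
  have p1 : 0 ≤ C2 * 2 ^ R := by positivity
  have p2 : 0 ≤ C4 * 2 ^ M := by positivity
  have hpow : ∀ j : ℕ, (0 : ℝ) < 2 ^ j := fun j => by positivity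
  rcases Nat.eq_zero_or_pos κ with rfl | hκ
  · refine (kernelNorm_mono ha _ (by positivity) (σ := 2) (by norm_num)).trans ?_
    rcases Nat.eq_zero_or_pos ν with rfl | hν
    · rw [hpsi0, hlam0]
      refine le_trans ?_ (hle (c := C5) (by linarith))
      simpa [offDiag] using h5
    · refine (h2 ((2 : ℝ) / 2 ^ ν) ⟨by positivity, ?_⟩ _ fun x => ?_).trans (le_trans (le_of_eq ?_)
        (hle (c := C2 * 2 ^ R) (by linarith)))
      · rw [div_le_one (hpow ν)]
        exact le_self_pow₀ one_le_two hν.ne'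
      · rw [smulSchwartz_apply, hpsi ν hν, hlam0]
      · rw [offDiag, if_pos (Nat.zero_le ν), pow_zero, div_pow, div_pow, one_pow]
        congr 1
        ring
  · have ht : (0 : ℝ) < 2 / 2 ^ κ := by positivity
    obtain ⟨g, hg⟩ := exists_schwartz_dilate (psis ν) (t := (2 : ℝ) ^ κ / 2) (by positivity)
    have hdil : kernelNorm a (smulSchwartz (psis ν) (lams κ)) (2 ^ κ)
        = kernelNorm a (smulSchwartz g lam1) 2 := by
      rw [kernelNorm_dilate a (h := smulSchwartz g lam1) ht (fun x => ?_) (2 ^ κ)]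
      · congr 1
        field_simp
      · rw [smulSchwartz_apply, smulSchwartz_apply, hlam κ hκ, hg, smul_smul]
        congr 2
        rw [show (2 : ℝ) ^ κ / 2 * (2 / 2 ^ κ) = 1 by field_simp, one_smul]
    rw [hdil]
    rcases Nat.eq_zero_or_pos ν with rfl | hν
    · refine (h4 ((2 : ℝ) ^ κ / 2) ?_ _ fun x => ?_).trans (le_trans (le_of_eq ?_)
        (hle (c := C4 * 2 ^ M) (by linarith)))
      · rw [Set.mem_Ici, le_div_iff₀ two_pos, one_mul]
        exact le_self_pow₀ one_le_two hκ.ne'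
      · rw [smulSchwartz_apply, hg, hpsi0]
      · rw [offDiag, if_neg (by omega), pow_zero, div_one, div_pow, inv_div]
        congr 1
        ring
    · have hfun : ∀ x, smulSchwartz g lam1 x = psi1 (((2 : ℝ) ^ κ / 2 ^ ν) • x) * lam1 x := by
        intro x
        rw [smulSchwartz_apply, hg, hpsi ν hν, smul_smul]
        congr 3
        field_simp
      rcases le_or_gt κ ν with hle' | hlt
      · refine (h1 _ ⟨by positivity, ?_⟩ _ hfun).trans (le_trans (le_of_eq ?_)
          (hle (c := C1) (by linarith)))
        · rw [div_le_one (hpow ν)]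
          exact pow_le_pow_right₀ one_le_two hle'
        · rw [offDiag, if_pos hle']
      · refine (h3 _ ?_ _ hfun).trans (le_trans (le_of_eq ?_) (hle (c := C3) (by linarith)))
        · rw [Set.mem_Ici, one_le_div (hpow ν)]
          exact pow_le_pow_right₀ one_le_two hlt.le
        · rw [offDiag, if_neg (by omega)]

end KernelDecay

section Pointwise

lemma enorm_le_peetreMax {a : ℝ} (ha : 0 < a) (κ : ℕ) (F : Rn n → ℂ) (x y z : Rn n) :
    ‖F (y - z)‖ₑ ≤ ENNReal.ofReal (1 + (2 ^ κ * ‖z‖) ^ a) *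
      (ENNReal.ofReal (2 ^ a * (1 + (2 ^ κ * ‖y - x‖) ^ a)) * peetreMax a κ F x) := by
  have hpos : ∀ v : Rn n, 0 < 1 + ((2 : ℝ) ^ κ * ‖v‖) ^ a := fun v => by positivity
  have h1 : ‖F (y - z)‖ₑ / ENNReal.ofReal (1 + ((2 : ℝ) ^ κ * ‖y - z - x‖) ^ a) ≤ peetreMax a κ F x :=
    le_iSup (fun y => (‖F y‖₊ : ℝ≥0∞) / ENNReal.ofReal (1 + ((2 : ℝ) ^ κ * ‖y - x‖) ^ a)) (y - z)
  rw [ENNReal.div_le_iff (ENNReal.ofReal_pos.2 (hpos _)).ne' ENNReal.ofReal_ne_top] at h1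
  refine h1.trans ?_
  rw [mul_comm, ← mul_assoc, ← ENNReal.ofReal_mul (hpos z).le]
  gcongr
  set A := (2 : ℝ) ^ κ * ‖y - x‖
  set B := (2 : ℝ) ^ κ * ‖z‖
  have hA : 0 ≤ A := by positivity
  have hB : 0 ≤ B := by positivity
  have h2 : (2 : ℝ) ^ κ * ‖y - z - x‖ ≤ A + B := by
    rw [← mul_add]
    gcongr
    calc ‖y - z - x‖ = ‖(y - x) - z‖ := by congr 1; abel
      _ ≤ _ := norm_sub_le _ _
  have h3 : (A + B) ^ a ≤ 2 ^ a * (A ^ a + B ^ a) := by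
    calc (A + B) ^ a ≤ (2 * max A B) ^ a := by
          gcongr
          linarith [le_max_left A B, le_max_right A B]
      _ = 2 ^ a * (max A B) ^ a := Real.mul_rpow two_pos.le (le_max_of_le_left hA)
      _ ≤ 2 ^ a * (A ^ a + B ^ a) := by
          gcongr
          have := Real.rpow_nonneg hA a
          have := Real.rpow_nonneg hB a
          rcases max_choice A B with h | h <;> rw [h] <;> linarith
  have h4 : (1 : ℝ) ≤ 2 ^ a := Real.one_le_rpow one_le_two ha.le
  have h5 : ((2 : ℝ) ^ κ * ‖y - z - x‖) ^ a ≤ (A + B) ^ a := by gcongr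
  have hAa := Real.rpow_nonneg hA a
  have hBa := Real.rpow_nonneg hB a
  calc 1 + ((2 : ℝ) ^ κ * ‖y - z - x‖) ^ a ≤ 2 ^ a * (1 + A ^ a + B ^ a) := by linarith
    _ ≤ 2 ^ a * (1 + A ^ a + B ^ a) + 2 ^ a * (A ^ a * B ^ a) :=
        le_add_of_nonneg_right (by positivity)
    _ = (1 + B ^ a) * (2 ^ a * (1 + A ^ a)) := by ring

lemma enorm_distConv_fourier_smulSchwartz_le {a : ℝ} (ha : 0 < a) (κ : ℕ) (f : TemperedDist n)
    (g h : 𝓢(Rn n, ℂ)) (x y : Rn n) :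
    ‖distConv (𝓕 (smulSchwartz g h)) f y‖ₑ ≤ kernelNorm a g (2 ^ κ) *
      (ENNReal.ofReal (2 ^ a * (1 + (2 ^ κ * ‖y - x‖) ^ a)) *
        peetreMax a κ (distConv (𝓕 h) f) x) := by
  rw [distConv_fourier_smulSchwartz]
  refine (enorm_integral_le_lintegral_enorm _).trans ?_
  have hm : Measurable fun z => ‖𝓕 g z‖ₑ * ENNReal.ofReal (1 + ((2 : ℝ) ^ κ * ‖z‖) ^ a) := by
    have := (𝓕 g).continuous.measurable
    fun_prop
  unfold kernelNorm
  rw [← lintegral_mul_const _ hm]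
  refine lintegral_mono fun z => ?_
  rw [enorm_mul, mul_assoc]
  gcongr
  exact enorm_le_peetreMax ha κ _ x y z

/-- The map `g ↦ (𝓕 g ∗ f)(y)` as a continuous functional. -/
def distConvFourierCLM (f : TemperedDist n) (y : Rn n) : 𝓢(Rn n, ℂ) →L[ℂ] ℂ :=
  (f.comp (SchwartzMap.compCLMOfAntilipschitz (𝕜 := ℂ) (K := 1)
    (hasTemperateGrowth_reflectTranslate y)
    ((Isometry.of_dist_eq (fun z z' => dist_sub_left y z z')).antilipschitz))).comp
    (FourierTransform.fourierCLM ℂ 𝓢(Rn n, ℂ))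

lemma enorm_distConv_fourier_le_tsum {a : ℝ} (ha : 0 < a) (f : TemperedDist n) (ψ : 𝓢(Rn n, ℂ))
    (lams phis : ℕ → 𝓢(Rn n, ℂ))
    (hres : Tendsto (fun J => ∑ κ ∈ Finset.range J,
      smulSchwartz (smulSchwartz ψ (lams κ)) (phis κ)) atTop (𝓝 ψ)) (x y : Rn n) :
    ‖distConv (𝓕 ψ) f y‖ₑ ≤ ∑' κ, kernelNorm a (smulSchwartz ψ (lams κ)) (2 ^ κ) *
      (ENNReal.ofReal (2 ^ a * (1 + (2 ^ κ * ‖y - x‖) ^ a)) *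
        peetreMax a κ (distConv (𝓕 (phis κ)) f) x) := by
  have hlim := (((distConvFourierCLM f y).continuous.tendsto ψ).comp hres).enorm
  refine le_of_tendsto hlim (Eventually.of_forall fun J => ?_)
  simp only [Function.comp_apply, map_sum]
  refine (enorm_sum_le _ _).trans ((Finset.sum_le_sum fun κ _ => ?_).trans
    (ENNReal.sum_le_tsum (Finset.range J)))
  exact enorm_distConv_fourier_smulSchwartz_le ha κ f _ _ x y

/-- The partial sums of the resolution of unity, multiplied by `ψ`, converge to `ψ`. -/
lemma tendsto_sum_smulSchwartz (phi0 phi1 χ lam0 lam1 ψ : 𝓢(Rn n, ℂ)) {r : ℝ} (hr : 0 < r)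
    (hχ : ∀ x, ‖x‖ < r → χ x = 1) (h0 : ∀ x, lam0 x * phi0 x = χ x)
    (h1 : ∀ x, lam1 x * phi1 x = χ ((2⁻¹ : ℝ) • x) - χ x) (lams phis : ℕ → 𝓢(Rn n, ℂ))
    (hphi0 : phis 0 = phi0) (hphi : ∀ j, 1 ≤ j → ∀ x, phis j x = phi1 (((2 : ℝ) / 2 ^ j) • x))
    (hlam0 : lams 0 = lam0) (hlam : ∀ j, 1 ≤ j → ∀ x, lams j x = lam1 (((2 : ℝ) / 2 ^ j) • x)) :
    Tendsto (fun J => ∑ κ ∈ Finset.range J,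
      smulSchwartz (smulSchwartz ψ (lams κ)) (phis κ)) atTop (𝓝 ψ) := by
  rw [← tendsto_add_atTop_iff_nat 1]
  refine tendsto_cutoff χ ψ hr hχ _ fun J x => ?_
  induction J with
  | zero =>
    rw [zero_add, Finset.sum_range_one, smulSchwartz_apply, smulSchwartz_apply, hlam0, hphi0,
      mul_assoc, h0, pow_zero, inv_one, one_smul, mul_comm]
  | succ J ih =>
    rw [Finset.sum_range_succ, _root_.add_apply, ih, smulSchwartz_apply, smulSchwartz_apply,
      hlam _ (by omega), hphi _ (by omega), mul_assoc, h1, smul_smul]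
    have e1 : (2 : ℝ) / 2 ^ (J + 1) = (2 ^ J)⁻¹ := by rw [pow_succ]; field_simp
    have e2 : (2⁻¹ : ℝ) * (2 ^ J)⁻¹ = (2 ^ (J + 1))⁻¹ := by rw [pow_succ]; field_simp
    rw [e1, e2]
    ring

lemma offDiag_nonneg (R M ν κ : ℕ) : 0 ≤ offDiag R M ν κ := by
  unfold offDiag; split_ifs <;> positivity

/-- Pointwise domination of Peetre maximal functions. -/
lemma peetreMax_le_tsum {a : ℝ} (ha : 0 < a) (f : TemperedDist n) (psis lams phis : ℕ → 𝓢(Rn n, ℂ))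
    (hres : ∀ ν, Tendsto (fun J => ∑ κ ∈ Finset.range J,
      smulSchwartz (smulSchwartz (psis ν) (lams κ)) (phis κ)) atTop (𝓝 (psis ν)))
    {C : ℝ} (hC : 0 ≤ C) {R M : ℕ}
    (hK : ∀ ν κ : ℕ, kernelNorm a (smulSchwartz (psis ν) (lams κ)) (2 ^ κ) ≤
      ENNReal.ofReal (C * offDiag R M ν κ)) (ν : ℕ) (x : Rn n) :
    peetreMax a ν (distConv (𝓕 (psis ν)) f) x ≤ ∑' κ, ENNReal.ofReal
      (C * 2 ^ a * (offDiag R M ν κ * max 1 ((2 ^ κ / 2 ^ ν) ^ a))) *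
        peetreMax a κ (distConv (𝓕 (phis κ)) f) x := by
  refine iSup_le fun y => ENNReal.div_le_of_le_mul ?_
  rw [← ENNReal.tsum_mul_right]
  refine (enorm_distConv_fourier_le_tsum ha f (psis ν) lams phis (hres ν) x y).trans
    (ENNReal.tsum_le_tsum fun κ => ?_)
  have hβ := offDiag_nonneg R M ν κ
  set d := ‖y - x‖
  have hd : 0 ≤ d := norm_nonneg _
  have hgrow : 1 + ((2 : ℝ) ^ κ * d) ^ a ≤
      max 1 ((2 ^ κ / 2 ^ ν) ^ a) * (1 + (2 ^ ν * d) ^ a) := by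
    have e : ((2 : ℝ) ^ κ * d) ^ a = (2 ^ κ / 2 ^ ν) ^ a * (2 ^ ν * d) ^ a := by
      rw [← Real.mul_rpow (by positivity) (by positivity)]
      congr 1
      field_simp
    rw [e, mul_add, mul_one]
    gcongr
    · exact le_max_left _ _
    · exact le_max_right _ _
  rw [mul_right_comm, ← mul_assoc]
  refine mul_le_mul_left ((mul_le_mul_left (hK ν κ) _).trans ?_) _
  rw [← ENNReal.ofReal_mul (by positivity), ← ENNReal.ofReal_mul (by positivity)]
  refine ENNReal.ofReal_le_ofReal ?_
  calc C * offDiag R M ν κ * (2 ^ a * (1 + (2 ^ κ * d) ^ a))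
      ≤ C * offDiag R M ν κ * (2 ^ a * (max 1 ((2 ^ κ / 2 ^ ν) ^ a) * (1 + (2 ^ ν * d) ^ a))) := by
        gcongr
    _ = _ := by ring

end Pointwise

section Weights

lemma weight_le_of_step_up {b : ℝ} {v : ℕ → ℝ} (h : ∀ j, v (j + 1) ≤ 2 ^ b * v j) (κ d : ℕ) :
    v (κ + d) ≤ ((2 : ℝ) ^ b) ^ d * v κ := by
  induction d with
  | zero => simp
  | succ d ih =>
    calc v (κ + (d + 1)) ≤ 2 ^ b * v (κ + d) := h _
      _ ≤ 2 ^ b * (((2 : ℝ) ^ b) ^ d * v κ) := by gcongr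
      _ = _ := by ring

lemma weight_le_of_step_down {b : ℝ} {v : ℕ → ℝ} (h : ∀ j, 2 ^ b * v j ≤ v (j + 1)) (ν d : ℕ) :
    ((2 : ℝ) ^ b) ^ d * v ν ≤ v (ν + d) := by
  induction d with
  | zero => simp
  | succ d ih =>
    calc ((2 : ℝ) ^ b) ^ (d + 1) * v ν = 2 ^ b * (((2 : ℝ) ^ b) ^ d * v ν) := by ring
      _ ≤ 2 ^ b * v (ν + d) := by gcongr
      _ ≤ _ := h _

/-- The off-diagonal decay absorbs the growth of the weights and of the Peetre denominators. -/
lemma offDiag_mul_weight_le {a al1 al2 δ : ℝ} (ha : 0 < a) {R M : ℕ} (hR : al2 + δ ≤ R)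
    (hM : a - al1 + δ ≤ M) {v : ℕ → ℝ} (hv : ∀ j, 0 < v j)
    (hup : ∀ j, v (j + 1) ≤ 2 ^ al2 * v j) (hdown : ∀ j, 2 ^ al1 * v j ≤ v (j + 1)) (ν κ : ℕ) :
    offDiag R M ν κ * max 1 ((2 ^ κ / 2 ^ ν) ^ a) * v ν ≤ 2 ^ (-δ * |(ν : ℝ) - κ|) * v κ := by
  have two_rpow_pow : ∀ (b : ℝ) (d : ℕ), ((2 : ℝ) ^ b) ^ d = 2 ^ (b * d) := fun b d => by
    rw [Real.rpow_mul two_pos.le, Real.rpow_natCast]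
  rcases le_or_gt κ ν with h | h
  · obtain ⟨d, rfl⟩ := Nat.exists_eq_add_of_le h
    have e : (2 : ℝ) ^ κ / 2 ^ (κ + d) = 2 ^ (-(d : ℝ)) := by
      rw [pow_add, Real.rpow_neg two_pos.le, Real.rpow_natCast]
      field_simp
    have hmax : max 1 (((2 : ℝ) ^ (-(d : ℝ))) ^ a) = 1 := by
      refine max_eq_left (Real.rpow_le_one (by positivity) ?_ ha.le)
      exact Real.rpow_le_one_of_one_le_of_nonpos one_le_two (by simp)
    rw [offDiag, if_pos h, e, hmax, mul_one, two_rpow_pow]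
    have habs : |((κ + d : ℕ) : ℝ) - κ| = d := by
      rw [Nat.cast_add, add_sub_cancel_left, Nat.abs_cast]
    rw [habs]
    calc (2 : ℝ) ^ (-(d : ℝ) * R) * v (κ + d)
        ≤ 2 ^ (-(d : ℝ) * R) * (((2 : ℝ) ^ al2) ^ d * v κ) := by
          gcongr; exact weight_le_of_step_up hup κ d
      _ = 2 ^ (-(d : ℝ) * R + al2 * d) * v κ := by
          rw [two_rpow_pow, ← mul_assoc, ← Real.rpow_add two_pos]
      _ ≤ 2 ^ (-δ * d) * v κ := by
          have := (hv κ).le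
          gcongr
          · exact one_le_two
          · nlinarith [(Nat.cast_nonneg d : (0 : ℝ) ≤ d)]
  · obtain ⟨d, rfl⟩ := Nat.exists_eq_add_of_le h.le
    have e : (2 : ℝ) ^ (ν + d) / 2 ^ ν = 2 ^ (d : ℝ) := by
      rw [pow_add, Real.rpow_natCast]
      field_simp
    have hmax : max 1 (((2 : ℝ) ^ (d : ℝ)) ^ a) = 2 ^ ((d : ℝ) * a) := by
      rw [Real.rpow_mul two_pos.le]
      refine max_eq_right (Real.one_le_rpow ?_ ha.le)
      exact Real.one_le_rpow one_le_two (by simp)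
    rw [offDiag, if_neg (by omega), e, hmax, two_rpow_pow, ← Real.rpow_neg two_pos.le]
    have habs : |(ν : ℝ) - (ν + d : ℕ)| = d := by
      rw [Nat.cast_add, sub_add_cancel_left, abs_neg, Nat.abs_cast]
    rw [habs]
    have hw : v ν ≤ 2 ^ (-(al1 * d)) * v (ν + d) := by
      have := weight_le_of_step_down hdown ν d
      rw [two_rpow_pow] at this
      rwa [Real.rpow_neg two_pos.le, le_inv_mul_iff₀ (by positivity)]
    calc (2 : ℝ) ^ (-((d : ℝ) * M)) * 2 ^ ((d : ℝ) * a) * v ν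
        ≤ (2 : ℝ) ^ (-((d : ℝ) * M)) * 2 ^ ((d : ℝ) * a) * (2 ^ (-(al1 * d)) * v (ν + d)) := by
          gcongr
      _ = 2 ^ (-((d : ℝ) * M) + d * a + -(al1 * d)) * v (ν + d) := by
          rw [Real.rpow_add two_pos, Real.rpow_add two_pos]; ring
      _ ≤ 2 ^ (-δ * d) * v (ν + d) := by
          have := (hv (ν + d)).le
          gcongr
          · exact one_le_two
          · nlinarith [(Nat.cast_nonneg d : (0 : ℝ) ≤ d)]

end Weights

section SequenceSpace

/-- The two-sided geometric weight `2 ^ (-δ |m|)`. -/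
def geomWeight (δ : ℝ) (m : ℤ) : ℝ≥0∞ := ENNReal.ofReal (2 ^ (-δ * |(m : ℝ)|))

lemma tsum_geomWeight_ne_top {δ : ℝ} (hδ : 0 < δ) : ∑' m, geomWeight δ m ≠ ∞ := by
  have hnat : Summable fun j : ℕ => (2 : ℝ) ^ (-δ * (j : ℝ)) := by
    simp_rw [Real.rpow_mul two_pos.le, Real.rpow_natCast]
    refine summable_geometric_of_lt_one (by positivity) ?_
    exact Real.rpow_lt_one_of_one_lt_of_neg one_lt_two (by linarith)
  have : Summable fun m : ℤ => (2 : ℝ) ^ (-δ * |(m : ℝ)|) :=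
    Summable.of_nat_of_neg (by simpa using hnat) (by simpa using hnat)
  exact this.tsum_ofReal_ne_top

lemma one_le_tsum_geomWeight (δ : ℝ) : 1 ≤ ∑' m, geomWeight δ m := by
  refine le_trans ?_ (ENNReal.le_tsum 0)
  simp [geomWeight]

lemma tsum_geomWeight_sub_le (δ : ℝ) (ν : ℕ) :
    ∑' κ : ℕ, geomWeight δ ((ν : ℤ) - κ) ≤ ∑' m, geomWeight δ m :=
  ENNReal.tsum_comp_le_tsum_of_injective (fun _ _ h => by simpa using h) (geomWeight δ)

lemma tsum_geomWeight_sub_le' (δ : ℝ) (κ : ℕ) :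
    ∑' ν : ℕ, geomWeight δ ((ν : ℤ) - κ) ≤ ∑' m, geomWeight δ m :=
  ENNReal.tsum_comp_le_tsum_of_injective (fun _ _ h => by simpa using h) (geomWeight δ)

lemma geomWeight_add (δ ε : ℝ) (m : ℤ) :
    geomWeight (δ + ε) m = geomWeight δ m * geomWeight ε m := by
  rw [geomWeight, geomWeight, geomWeight, ← ENNReal.ofReal_mul (by positivity),
    ← Real.rpow_add two_pos]
  congr 2
  ring

lemma geomWeight_rpow (δ q : ℝ) (hq : 0 ≤ q) (m : ℤ) :
    geomWeight δ m ^ q = geomWeight (δ * q) m := by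
  rw [geomWeight, geomWeight, ENNReal.ofReal_rpow_of_nonneg (by positivity) hq,
    ← Real.rpow_mul two_pos.le]
  congr 2
  ring

lemma geomWeight_anti {δ ε : ℝ} (h : δ ≤ ε) (m : ℤ) : geomWeight ε m ≤ geomWeight δ m := by
  unfold geomWeight
  gcongr
  exact one_le_two

lemma geomWeight_le_one {δ : ℝ} (h : 0 ≤ δ) (m : ℤ) : geomWeight δ m ≤ 1 := by
  have := geomWeight_anti h m
  simpa [geomWeight] using this

/-- Discrete convolution with a geometric weight is bounded on `ℓ^q`, uniformly for `q` bounded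
away from zero. -/
lemma exists_lqNorm_le {δ q0 : ℝ} (hδ : 0 < δ) (hq0 : 0 < q0) (D : ℝ) :
    ∃ c : ℝ, 0 < c ∧ ∀ q : ℝ≥0∞, ENNReal.ofReal q0 ≤ q → ∀ a b : ℕ → ℝ≥0∞,
      (∀ ν, a ν ≤ ∑' κ : ℕ, ENNReal.ofReal D * geomWeight δ ((ν : ℤ) - κ) * b κ) →
        lqNorm q a ≤ ENNReal.ofReal c * lqNorm q b := by
  set S := ∑' m, geomWeight (δ / 2) m with hS
  set S' := ∑' m, geomWeight (δ / 2 * q0) m with hS'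
  have hSt : S ≠ ∞ := tsum_geomWeight_ne_top (by positivity)
  have hS't : S' ≠ ∞ := tsum_geomWeight_ne_top (by positivity)
  have hS'1 : 1 ≤ S' := one_le_tsum_geomWeight _
  set E := ENNReal.ofReal D * S with hE
  set T := E * S' ^ (1 / q0) with hT
  have hTt : T ≠ ∞ := ENNReal.mul_ne_top (ENNReal.mul_ne_top ENNReal.ofReal_ne_top hSt)
    (ENNReal.rpow_ne_top_of_nonneg (by positivity) hS't)
  have hTc : T ≤ ENNReal.ofReal (T.toReal + 1) := by
    rw [← ENNReal.ofReal_toReal hTt]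
    exact ENNReal.ofReal_le_ofReal (by simp)
  refine ⟨T.toReal + 1, by positivity, fun q hq a b h => ?_⟩
  refine le_trans ?_ (mul_le_mul_left hTc _)
  have hone : 1 ≤ S' ^ (1 / q0) := ENNReal.one_le_rpow hS'1 (by positivity)
  have hsup : ∀ (ν : ℕ) (X : ℝ≥0∞), (∀ κ : ℕ, geomWeight (δ / 2) ((ν : ℤ) - κ) * b κ ≤ X) →
      a ν ≤ E * X := by
    intro ν X hX
    calc a ν ≤ ∑' κ : ℕ, ENNReal.ofReal D * geomWeight δ ((ν : ℤ) - κ) * b κ := h ν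
      _ ≤ ∑' κ : ℕ, ENNReal.ofReal D * (geomWeight (δ / 2) ((ν : ℤ) - κ) * X) := by
          refine ENNReal.tsum_le_tsum fun κ => ?_
          rw [show δ = δ / 2 + δ / 2 by ring, geomWeight_add, ← show δ = δ / 2 + δ / 2 by ring,
            mul_assoc, mul_assoc]
          gcongr
          exact hX κ
      _ = ENNReal.ofReal D * ((∑' κ : ℕ, geomWeight (δ / 2) ((ν : ℤ) - κ)) * X) := by
          rw [ENNReal.tsum_mul_left, ENNReal.tsum_mul_right]
      _ ≤ ENNReal.ofReal D * (S * X) := by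
          gcongr
          exact tsum_geomWeight_sub_le _ _
      _ = E * X := by rw [hE, mul_assoc]
  clear_value E T
  rcases eq_or_ne q ∞ with rfl | hqt
  · simp only [lqNorm, if_true]
    refine iSup_le fun ν => (hsup ν (⨆ κ, b κ) fun κ => ?_).trans ?_
    · exact (mul_le_of_le_one_left' (geomWeight_le_one (by positivity) _)).trans (le_iSup b κ)
    · gcongr
      exact hT ▸ le_mul_of_one_le_right' hone
  · simp only [lqNorm, if_neg hqt]
    set r := q.toReal with hr
    have hqr : q0 ≤ r := (ENNReal.ofReal_le_iff_le_toReal hqt).1 hq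
    have hr0 : 0 < r := hq0.trans_le hqr
    have hpow : ∀ ν, a ν ^ r ≤
        E ^ r * ∑' κ : ℕ, geomWeight (δ / 2 * q0) ((ν : ℤ) - κ) * b κ ^ r := by
      intro ν
      set Y := ∑' κ : ℕ, geomWeight (δ / 2 * q0) ((ν : ℤ) - κ) * b κ ^ r with hY
      have := hsup ν (Y ^ (1 / r)) fun κ => by
        rw [one_div, ENNReal.le_rpow_inv_iff hr0, ENNReal.mul_rpow_of_nonneg _ _ hr0.le,
          geomWeight_rpow _ _ hr0.le]
        refine le_trans ?_ (ENNReal.le_tsum κ)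
        gcongr
        exact geomWeight_anti (by gcongr) _
      refine (ENNReal.rpow_le_rpow this hr0.le).trans (le_of_eq ?_)
      rw [ENNReal.mul_rpow_of_nonneg _ _ hr0.le, ← ENNReal.rpow_mul, one_div_mul_cancel hr0.ne',
        ENNReal.rpow_one]
    have hsum : ∑' ν, a ν ^ r ≤ E ^ r * (S' * ∑' κ, b κ ^ r) := by
      refine (ENNReal.tsum_le_tsum hpow).trans ?_
      rw [ENNReal.tsum_mul_left, ENNReal.tsum_comm]
      gcongr
      rw [← ENNReal.tsum_mul_left]
      refine ENNReal.tsum_le_tsum fun κ => ?_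
      rw [ENNReal.tsum_mul_right]
      gcongr
      exact tsum_geomWeight_sub_le' _ _
    calc (∑' ν, a ν ^ r) ^ (1 / r) ≤ (E ^ r * (S' * ∑' κ, b κ ^ r)) ^ (1 / r) := by gcongr
      _ = E * (S' ^ (1 / r) * (∑' κ, b κ ^ r) ^ (1 / r)) := by
          rw [ENNReal.mul_rpow_of_nonneg _ _ (by positivity),
            ENNReal.mul_rpow_of_nonneg _ _ (by positivity), ← ENNReal.rpow_mul,
            mul_one_div_cancel hr0.ne', ENNReal.rpow_one]
      _ ≤ E * (S' ^ (1 / q0) * (∑' κ, b κ ^ r) ^ (1 / r)) := by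
          gcongr
      _ = T * (∑' κ, b κ ^ r) ^ (1 / r) := by rw [hT, mul_assoc]

end SequenceSpace

section NormMonotonicity

lemma phiVE_mono (t : ℝ≥0∞) : Monotone (phiVE t) := by
  intro s s' h
  unfold phiVE
  split_ifs with h1 h2 h3 h3
  · exact le_rfl
  · exact zero_le
  · exact absurd (h.trans h3) h2
  · exact le_rfl
  · gcongr

lemma vLpNorm_le_mul (p : Rn n → ℝ≥0∞) {g h : Rn n → ℝ≥0∞} {c : ℝ≥0∞} (hc0 : c ≠ 0) (hc : c ≠ ∞)
    (hgh : ∀ᵐ x, g x ≤ c * h x) : vLpNorm p g ≤ c * vLpNorm p h := by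
  rw [← ENNReal.div_le_iff' hc0 hc]
  refine le_sInf fun lam hlam => ?_
  rw [ENNReal.div_le_iff' hc0 hc]
  refine sInf_le (le_trans (lintegral_mono_ae ?_) hlam)
  filter_upwards [hgh] with x hx
  refine phiVE_mono _ ?_
  rw [← ENNReal.mul_div_mul_left (h x) lam hc0 hc]
  gcongr

lemma morreyNorm_le_mul (p u : Rn n → ℝ≥0∞) {g h : Rn n → ℝ≥0∞} {c : ℝ≥0∞} (hc0 : c ≠ 0)
    (hc : c ≠ ∞) (hgh : ∀ᵐ x, g x ≤ c * h x) : morreyNorm p u g ≤ c * morreyNorm p u h := by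
  refine iSup_le fun x => iSup_le fun r => iSup_le fun hr => ?_
  have hball : ∀ᵐ y, (Metric.ball x r).indicator g y ≤ c * (Metric.ball x r).indicator h y := by
    filter_upwards [hgh] with y hy
    by_cases hyb : y ∈ Metric.ball x r <;> simp [hyb, hy]
  calc _ ≤ ENNReal.ofReal (r ^ ((n : ℝ) * ((u x)⁻¹.toReal - (p x)⁻¹.toReal))) *
        (c * vLpNorm p ((Metric.ball x r).indicator h)) := by
        gcongr
        exact vLpNorm_le_mul p hc0 hc hball
    _ = c * (ENNReal.ofReal (r ^ ((n : ℝ) * ((u x)⁻¹.toReal - (p x)⁻¹.toReal))) *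
        vLpNorm p ((Metric.ball x r).indicator h)) := by ring
    _ ≤ _ := by
        gcongr
        exact le_iSup_of_le x (le_iSup_of_le r (le_iSup_of_le hr le_rfl))

end NormMonotonicity

/-- comparison of Peetre maximal functions built from two different
systems of kernels, in vector-valued variable exponent Morrey spaces. -/
theorem statement13 (n : ℕ) (al al1 al2 C : ℝ) (h12 : al1 ≤ al2) (hal : 0 ≤ al)
    (w : ℕ → Rn n → ℝ) (hw : AdmissibleWeights al al1 al2 C w)
    (p q u : Rn n → ℝ≥0∞) (hp : IsVarExp p) (hq : IsVarExp q) (hu : IsVarExp u)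
    (hpu : ∀ x, p x ≤ u x)
    (a : ℝ) (ha : 0 < a) (R : ℕ) (hR : al2 < R)
    (psi0 psi1 phi0 phi1 : SchwartzMap (Rn n) ℂ)
    (hmom : ∀ m : ℕ, m < R → iteratedFDeriv ℝ m (⇑psi1) 0 = 0)
    (eps k : ℝ) (heps : 0 < eps) (hk1 : 1 < k) (hk2 : k ≤ 2)
    (hphi0 : ∀ x : Rn n, ‖x‖ ≤ k * eps → 0 < ‖phi0 x‖)
    (hphi1 : ∀ x : Rn n, eps ≤ ‖x‖ → ‖x‖ ≤ 2 * k * eps → 0 < ‖phi1 x‖)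
    (psis phis : ℕ → SchwartzMap (Rn n) ℂ)
    (hpsis0 : psis 0 = psi0) (hpsis1 : psis 1 = psi1)
    (hpsis : ∀ j : ℕ, 2 ≤ j → ∀ x : Rn n, psis j x = psi1 ((2 : ℝ) ^ (-(j : ℝ) + 1) • x))
    (hphis0 : phis 0 = phi0) (hphis1 : phis 1 = phi1)
    (hphis : ∀ j : ℕ, 2 ≤ j → ∀ x : Rn n, phis j x = phi1 ((2 : ℝ) ^ (-(j : ℝ) + 1) • x)) :
    ∃ c : ℝ, 0 < c ∧ ∀ f : TemperedDist n,
      morreySeqNorm p u q (fun j x => ENNReal.ofReal (w j x) *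
          peetreMax a j (distConv (SchwartzMap.fourierTransformCLM ℂ (psis j)) f) x) ≤
        ENNReal.ofReal c *
          morreySeqNorm p u q (fun j x => ENNReal.ofReal (w j x) *
            peetreMax a j (distConv (SchwartzMap.fourierTransformCLM ℂ (phis j)) f) x) := by
  have hdyadic : ∀ (g : ℕ → 𝓢(Rn n, ℂ)) (g1 : 𝓢(Rn n, ℂ)), g 1 = g1 →
      (∀ j : ℕ, 2 ≤ j → ∀ x : Rn n, g j x = g1 ((2 : ℝ) ^ (-(j : ℝ) + 1) • x)) →
      ∀ j, 1 ≤ j → ∀ x, g j x = g1 (((2 : ℝ) / 2 ^ j) • x) := by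
    intro g g1 h1 h2 j hj x
    rcases hj.eq_or_lt with rfl | hj
    · simp [h1]
    · rw [h2 j hj, two_rpow_neg_add_one]
  have hpsi := hdyadic psis psi1 hpsis1 hpsis
  have hphi := hdyadic phis phi1 hphis1 hphis
  obtain ⟨χ, lam0, lam1, hχ, hlam0, hlam1, hvan⟩ :=
    exists_resolution phi0 phi1 eps k heps hk1 hphi0 hphi1
  choose dil hdil using fun j : ℕ =>
    exists_schwartz_dilate lam1 (t := (2 : ℝ) / 2 ^ j) (by positivity)
  set lams : ℕ → 𝓢(Rn n, ℂ) := fun j => if j = 0 then lam0 else dil j with hlams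
  have hl0 : lams 0 = lam0 := if_pos rfl
  have hl : ∀ j, 1 ≤ j → ∀ x, lams j x = lam1 (((2 : ℝ) / 2 ^ j) • x) := fun j hj x => by
    rw [hlams]
    simp only [if_neg (Nat.one_le_iff_ne_zero.1 hj), hdil]
  set δ : ℝ := R - al2 with hδ
  have hδ0 : 0 < δ := sub_pos.2 hR
  set M : ℕ := ⌈a - al1 + δ⌉₊ with hM
  obtain ⟨K, hK0, hK⟩ := exists_kernelNorm_smul_le ha R M psi0 psi1 lam0 lam1 hmom heps hvan psis
    lams hpsis0 hpsi hl0 hl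
  have hres := fun ν => tendsto_sum_smulSchwartz phi0 phi1 χ lam0 lam1 (psis ν) heps hχ hlam0 hlam1
    lams phis hphis0 hphi hl0 hl
  set q0 : ℝ := (min (essInf q volume) 1).toReal with hq0
  have hmin_top : min (essInf q volume) 1 ≠ ∞ := ne_top_of_le_ne_top one_ne_top (min_le_right _ _)
  have hq0pos : 0 < q0 := ENNReal.toReal_pos (lt_min hq.2.2 one_pos).ne' hmin_top
  have hqae : ∀ᵐ x, ENNReal.ofReal q0 ≤ q x := by
    filter_upwards [ae_essInf_le (f := q) (μ := volume)] with x hx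
    rw [hq0, ENNReal.ofReal_toReal hmin_top]
    exact (min_le_left _ _).trans hx
  obtain ⟨c, hc, hlq⟩ := exists_lqNorm_le hδ0 hq0pos (K * 2 ^ a)
  refine ⟨c, hc, fun f => ?_⟩
  refine morreyNorm_le_mul p u (ENNReal.ofReal_pos.2 hc).ne' ENNReal.ofReal_ne_top ?_
  filter_upwards [hqae] with x hx
  refine hlq (q x) hx _ _ fun ν => ?_
  refine (mul_le_mul_right (peetreMax_le_tsum ha f psis lams phis hres hK0 hK ν x) _).trans ?_
  rw [← ENNReal.tsum_mul_left]
  refine ENNReal.tsum_le_tsum fun κ => ?_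
  have hwpos : ∀ j, 0 < w j x := fun j => (hw.2.1 j x x).1
  have hreal := offDiag_mul_weight_le (δ := δ) ha (R := R) (M := M) (by rw [hδ]; linarith)
    (Nat.le_ceil _) hwpos (fun j => (hw.2.2 j x).2) (fun j => (hw.2.2 j x).1) ν κ
  change _ ≤ ENNReal.ofReal (K * 2 ^ a) * geomWeight δ ((ν : ℤ) - κ) *
    (ENNReal.ofReal (w κ x) * peetreMax a κ (distConv (𝓕 (phis κ)) f) x)
  rw [← mul_assoc, ← mul_assoc (ENNReal.ofReal (K * 2 ^ a) * _)]
  gcongr ?_ * _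
  rw [geomWeight, ← ENNReal.ofReal_mul (hwpos ν).le, ← ENNReal.ofReal_mul (by positivity),
    ← ENNReal.ofReal_mul (by positivity)]
  refine ENNReal.ofReal_le_ofReal ?_
  push_cast
  calc w ν x * (K * 2 ^ a * (offDiag R M ν κ * max 1 ((2 ^ κ / 2 ^ ν) ^ a)))
      = K * 2 ^ a * (offDiag R M ν κ * max 1 ((2 ^ κ / 2 ^ ν) ^ a) * w ν x) := by ring
    _ ≤ K * 2 ^ a * (2 ^ (-δ * |(ν : ℝ) - κ|) * w κ x) := by gcongr
    _ = _ := by ring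

end
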